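/- arXiv:1609.09796 — 9 statements merged into one kernel-verified Lean document; each statement's English description precedes it below -/
import Mathlib

section
/- Let q ≥ 1 and let D be a symmetric q-Kalmanson n×n real matrix with n ≥ 2q+1. Then the identity permutation ⟨1,2,…,n⟩ minimizes the q-stripe TSP objective, i.e. F_q(id) ≤ F_q(π) for every permutation π of {1,…,n}. -/
/-- Cyclic shift: the city `p` steps after position `i` in the circular order on `Fin n`. -/
def finShift {n : ℕ} (i : Fin n) (p : ℕ) : Fin n :=
  ⟨(i.val + p) % n, Nat.mod_lt _ i.pos⟩

/-- The `q`-stripe TSP objective: `∑_{p=1}^{q} ∑_{i=1}^{n} d(π(i), π(i+p))`,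
indices taken cyclically modulo `n`. -/
noncomputable def stripeObj (q : ℕ) {n : ℕ} (D : Fin n → Fin n → ℝ)
    (π : Equiv.Perm (Fin n)) : ℝ :=
  ∑ p ∈ Finset.Icc 1 q, ∑ i : Fin n, D (π i) (π (finShift i p))

/-- The fully crossing involution on `2q+2` points: `j ↦ j + (q+1) (mod 2q+2)`. -/
def crossShift (q : ℕ) (j : Fin (2*q+2)) : Fin (2*q+2) :=
  ⟨(j.val + (q+1)) % (2*q+2), Nat.mod_lt _ (by omega)⟩

/-- A symmetric matrix `D` is `q`-Kalmanson if for every choice of `2q+2` indices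
(in increasing order, via a strictly monotone `f`), the fully crossing matching has
maximum weight among all perfect matchings of these `2q+2` indices.  Perfect
matchings are encoded as fixed-point-free involutions `σ`; each matching weight is
counted twice in the sums below (once from each endpoint), which for symmetric `D`
is equivalent to comparing matching weights. -/
def qKalmanson (q : ℕ) {n : ℕ} (D : Fin n → Fin n → ℝ) : Prop :=
  ∀ f : Fin (2*q+2) → Fin n, StrictMono f →
    ∀ σ : Equiv.Perm (Fin (2*q+2)), (∀ j, σ (σ j) = j) → (∀ j, σ j ≠ j) →
      ∑ j : Fin (2*q+2), D (f j) (f (σ j)) ≤ ∑ j : Fin (2*q+2), D (f j) (f (crossShift q j))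

/-!
The proof is by induction on the number `m` of cities. For `m = 2q + 1` all tours have the same
objective, since any two distinct cities are at most `q` steps apart. For the induction step,
rotate the tour so that it ends with the last city `z`. Inserting `z` into the tour of the other
cities raises the objective by a constant minus the sum of the Farris transforms of the `q` pairs of
cities that end up `q + 1` steps apart across `z`, and the identity tour maximizes this sum: the
pairs, together with a pair containing `z` and one further city, form a crossing matching of
`2q + 2` cities. The Farris transform at `z` keeps the Kalmanson property and gives every pair
containing `z` weight zero, so the city matched with `z` may be exchanged freely. Alternating such
exchanges with sorting, neither of which decreases the crossing weight, leads to the `q + 1` first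
and the `q + 1` last cities, which is the matching of the identity tour.
-/

theorem le_val_of_strictMono {a b : ℕ} {f : Fin a → Fin b} (hf : StrictMono f) (k : Fin a) :
    (k : ℕ) ≤ f k := by
  simpa using Finset.card_le_card_of_injOn f (s := Finset.Iio k) (t := Finset.Iio (f k))
    (fun i hi ↦ by simpa using hf (by simpa using hi)) hf.injective.injOn

theorem sub_val_le_of_strictMono {a b : ℕ} {f : Fin a → Fin b} (hf : StrictMono f) (k : Fin a) :
    a - 1 - k ≤ b - 1 - f k := by
  simpa using Finset.card_le_card_of_injOn f (s := Finset.Ioi k) (t := Finset.Ioi (f k))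
    (fun i hi ↦ by simpa using hf (by simpa using hi)) hf.injective.injOn

theorem eq_of_strictMono_of_range_subset {k : ℕ} {α : Type*} [LinearOrder α] {f g : Fin k → α}
    (hf : StrictMono f) (hg : StrictMono g) (h : Set.range f ⊆ Set.range g) : f = g := by
  have hcard : (Finset.univ.image g).card = k := by
    rw [Finset.card_image_of_injective _ hg.injective, Finset.card_fin]
  have hfg : ∀ i, f i ∈ Finset.univ.image g := fun i ↦ by simpa using h ⟨i, rfl⟩
  rw [Finset.orderEmbOfFin_unique hcard hfg hf, ← Finset.orderEmbOfFin_unique hcard (by simp) hg]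

theorem strictMono_comp_sort {k : ℕ} {α : Type*} [LinearOrder α] {f : Fin k → α}
    (hf : Function.Injective f) : StrictMono (f ∘ Tuple.sort f) :=
  (Tuple.monotone_sort f).strictMono_of_injective (hf.comp (Tuple.sort f).injective)

theorem update_injective_of_notMem_range {ι α : Type*} [DecidableEq ι] {f : ι → α}
    (hf : Function.Injective f) (i : ι) {a : α} (ha : a ∉ Set.range f) :
    Function.Injective (Function.update f i a) := fun x y hxy ↦ by
  grind [Function.update_apply]

/-- The `j`-th point of the first half of the `2q+2` points that `crossShift q` matches. -/
def lowerHalf {q : ℕ} (j : Fin (q + 1)) : Fin (2 * q + 2) := ⟨j, by lia⟩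

/-- The `j`-th point of the second half of the `2q+2` points that `crossShift q` matches. -/
def upperHalf {q : ℕ} (j : Fin (q + 1)) : Fin (2 * q + 2) := ⟨q + 1 + j, by lia⟩

/-- The point that `crossShift q` matches with the last of the `2q+2` points. -/
def lastPartner (q : ℕ) : Fin (2 * q + 2) := ⟨q, by lia⟩

theorem upperHalf_last (q : ℕ) : upperHalf (Fin.last q) = Fin.last (2 * q + 1) := by
  ext
  simp only [upperHalf, Fin.val_last]
  lia

theorem last_ne_lastPartner (q : ℕ) : Fin.last (2 * q + 1) ≠ lastPartner q := by
  simp only [lastPartner, ne_eq, Fin.ext_iff, Fin.val_last]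
  lia

theorem crossShift_involutive (q : ℕ) : Function.Involutive (crossShift q) := fun j ↦ by
  ext
  simp only [crossShift, Nat.mod_add_mod]
  rw [add_assoc, show q + 1 + (q + 1) = 2 * q + 2 by ring, Nat.add_mod_right,
    Nat.mod_eq_of_lt j.isLt]

theorem crossShift_lowerHalf {q : ℕ} (j : Fin (q + 1)) :
    crossShift q (lowerHalf j) = upperHalf j := by
  ext
  simp only [crossShift, lowerHalf, upperHalf]
  rw [Nat.mod_eq_of_lt (by lia), add_comm]

theorem crossShift_upperHalf {q : ℕ} (j : Fin (q + 1)) :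
    crossShift q (upperHalf j) = lowerHalf j := by
  rw [← crossShift_lowerHalf, crossShift_involutive]

theorem crossShift_ne_self {q : ℕ} (k : Fin (2 * q + 2)) : crossShift q k ≠ k := by
  intro h
  have hmod : k + (q + 1) ≡ k + 0 [MOD 2 * q + 2] := by
    rw [Nat.ModEq, add_zero, Nat.mod_eq_of_lt k.isLt]
    exact congrArg Fin.val h
  have := Nat.ModEq.eq_of_lt_of_lt (Nat.ModEq.add_left_cancel' _ hmod) (by lia) (by lia)
  lia

theorem sum_eq_sum_lowerHalf_add_sum_upperHalf {q : ℕ} {M : Type*} [AddCommMonoid M]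
    (F : Fin (2 * q + 2) → M) :
    ∑ k, F k = ∑ j, F (lowerHalf j) + ∑ j, F (upperHalf j) := by
  rw [← Equiv.sum_comp (finCongr (show q + 1 + (q + 1) = 2 * q + 2 by ring)), Fin.sum_univ_add]
  rfl

section CrossWeight

variable {α : Type*} {q : ℕ} {D : α → α → ℝ}

/-- Twice the weight of the matching that pairs `g j` with `g (j + q + 1)`. -/
def crossWeight (q : ℕ) (D : α → α → ℝ) (g : Fin (2 * q + 2) → α) : ℝ :=
  ∑ k, D (g k) (g (crossShift q k))

theorem crossWeight_eq_two_mul_sum (hsymm : ∀ i j, D i j = D j i) (g : Fin (2 * q + 2) → α) :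
    crossWeight q D g = 2 * ∑ j, D (g (upperHalf j)) (g (lowerHalf j)) := by
  rw [crossWeight, sum_eq_sum_lowerHalf_add_sum_upperHalf, two_mul]
  simp only [crossShift_lowerHalf, crossShift_upperHalf]
  rw [Finset.sum_congr rfl fun j _ ↦ hsymm (g (lowerHalf j)) _]

theorem crossWeight_eq_two_mul_sum_castSucc (hsymm : ∀ i j, D i j = D j i)
    {g : Fin (2 * q + 2) → α} (hlast : ∀ i, D (g (Fin.last _)) i = 0) :
    crossWeight q D g =
      2 * ∑ j : Fin q, D (g (upperHalf j.castSucc)) (g (lowerHalf j.castSucc)) := by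
  rw [crossWeight_eq_two_mul_sum hsymm, Fin.sum_univ_castSucc, upperHalf_last, hlast, add_zero]

theorem crossWeight_congr_of_ne_lastPartner (hsymm : ∀ i j, D i j = D j i)
    {g g' : Fin (2 * q + 2) → α} (hlast : ∀ i, D (g (Fin.last _)) i = 0)
    (h : ∀ k ≠ lastPartner q, g' k = g k) : crossWeight q D g' = crossWeight q D g := by
  have hlast' : g' (Fin.last _) = g (Fin.last _) := h _ (last_ne_lastPartner q)
  rw [crossWeight_eq_two_mul_sum_castSucc hsymm hlast,
    crossWeight_eq_two_mul_sum_castSucc hsymm (hlast' ▸ hlast)]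
  congr! 3 with j
  · exact h _ (by simp only [upperHalf, lastPartner, ne_eq, Fin.ext_iff]; lia)
  · exact h _ (by simp only [lowerHalf, lastPartner, ne_eq, Fin.ext_iff, Fin.val_castSucc]; lia)

end CrossWeight

theorem qKalmanson.crossWeight_le_sort {q n : ℕ} {D : Fin n → Fin n → ℝ} (hK : qKalmanson q D)
    {g : Fin (2 * q + 2) → Fin n} (hg : Function.Injective g) :
    crossWeight q D g ≤ crossWeight q D (g ∘ Tuple.sort g) := by
  set ρ := Tuple.sort g
  let σ : Equiv.Perm (Fin (2 * q + 2)) :=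
    (ρ.trans (crossShift_involutive q).toPerm).trans ρ.symm
  have hσ : ∀ j, ρ (σ j) = crossShift q (ρ j) := fun j ↦ by simp [σ]
  calc crossWeight q D g = ∑ j, D ((g ∘ ρ) j) ((g ∘ ρ) (σ j)) := by
        rw [crossWeight, ← Equiv.sum_comp ρ]
        simp only [Function.comp_apply, hσ]
    _ ≤ crossWeight q D (g ∘ ρ) := by
        refine hK _ (strictMono_comp_sort hg) σ (fun j ↦ ρ.injective ?_)
          fun j hj ↦ crossShift_ne_self (ρ j) ?_
        · rw [hσ, hσ, crossShift_involutive]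
        · rw [← hσ, hj]

section Exchange

variable {q r : ℕ}

/-- The strictly increasing choice of `2q+2` cities among `0, …, 2q+r+1` that takes the `q+1` first
and the `q+1` last ones. -/
def outerCities (q r : ℕ) (k : Fin (2 * q + 2)) : Fin (q + 1 + r + q + 1) :=
  ⟨if (k : ℕ) ≤ q then k else k + r, by split_ifs <;> lia⟩

theorem val_outerCities_lowerHalf (j : Fin (q + 1)) : (outerCities q r (lowerHalf j) : ℕ) = j :=
  if_pos (Nat.le_of_lt_succ j.isLt)

theorem val_outerCities_upperHalf_castSucc (j : Fin q) :
    (outerCities q r (upperHalf j.castSucc) : ℕ) = q + 1 + r + j := by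
  simp only [outerCities, upperHalf, Fin.val_castSucc]
  split_ifs <;> lia

theorem outerCities_last : outerCities q r (Fin.last _) = Fin.last _ := by
  ext
  simp only [outerCities, Fin.val_last]
  split_ifs <;> lia

theorem outerCities_strictMono : StrictMono (outerCities q r) := fun a b hab ↦ by
  simp only [outerCities, Fin.lt_def] at hab ⊢
  split_ifs <;> lia

variable {f g : Fin (2 * q + 2) → Fin (q + 1 + r + q + 1)} {k : Fin (2 * q + 2)}

theorem outerCities_lt_apply_lastPartner (hf : StrictMono f) (hk : k < lastPartner q) :
    outerCities q r k < f (lastPartner q) := by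
  refine lt_of_le_of_lt ?_ (hf hk)
  rw [Fin.lt_def, lastPartner] at hk
  simp only [Fin.le_def, outerCities, if_pos hk.le]
  exact le_val_of_strictMono hf k

theorem apply_lastPartner_lt_outerCities (hf : StrictMono f) (hk : lastPartner q < k) :
    f (lastPartner q) < outerCities q r k := by
  refine lt_of_lt_of_le (hf hk) ?_
  rw [Fin.lt_def, lastPartner] at hk
  simp only [Fin.le_def, outerCities, if_neg hk.not_ge]
  have := sub_val_le_of_strictMono hf k
  lia

theorem outerCities_ne_apply_lastPartner (hf : StrictMono f) (hk : k ≠ lastPartner q) :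
    outerCities q r k ≠ f (lastPartner q) :=
  hk.lt_or_gt.elim (fun h ↦ (outerCities_lt_apply_lastPartner hf h).ne)
    fun h ↦ (apply_lastPartner_lt_outerCities hf h).ne'

theorem outerCities_eq_apply (hf : StrictMono f)
    (hrange : ∀ k ≠ lastPartner q, outerCities q r k ∈ Set.range f) (hk : k ≠ lastPartner q) :
    outerCities q r k = f k := by
  let o := Function.update (outerCities q r) (lastPartner q) (f (lastPartner q))
  have ho : ∀ j ≠ lastPartner q, o j = outerCities q r j := fun j hj ↦ Function.update_of_ne hj _ _
  have ho_partner : o (lastPartner q) = f (lastPartner q) := Function.update_self ..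
  have ho_mono : StrictMono o := by
    intro a b hab
    by_cases ha : a = lastPartner q
    · rw [ha, ho_partner, ho b (ha ▸ hab.ne')]
      exact apply_lastPartner_lt_outerCities hf (ha ▸ hab)
    by_cases hb : b = lastPartner q
    · rw [hb, ho_partner, ho a ha]
      exact outerCities_lt_apply_lastPartner hf (hb ▸ hab)
    · rw [ho a ha, ho b hb]
      exact outerCities_strictMono hab
  have ho_range : Set.range o ⊆ Set.range f := by
    rintro _ ⟨j, rfl⟩
    by_cases hj : j = lastPartner q
    · exact ⟨j, by rw [hj, ho_partner]⟩
    · exact ho j hj ▸ hrange j hj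
  rw [← ho k hk, eq_of_strictMono_of_range_subset ho_mono hf ho_range]

open Classical in
/-- The positions of the outer cities, other than the irrelevant partner of the last city, that are
missing from `g`; its cardinality measures the progress of the exchange argument. -/
noncomputable def missingOuter (g : Fin (2 * q + 2) → Fin (q + 1 + r + q + 1)) :
    Finset (Fin (2 * q + 2)) :=
  {k | k ≠ lastPartner q ∧ outerCities q r k ∉ Set.range g}

theorem mem_missingOuter :
    k ∈ missingOuter g ↔ k ≠ lastPartner q ∧ outerCities q r k ∉ Set.range g := by
  simp [missingOuter]

theorem missingOuter_congr (h : Set.range f = Set.range g) : missingOuter f = missingOuter g := by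
  simp only [missingOuter, h]

theorem missingOuter_update_ssubset (hf : StrictMono f) (hk : k ∈ missingOuter f) :
    missingOuter (Function.update f (lastPartner q) (outerCities q r k)) ⊂ missingOuter f := by
  rw [Finset.ssubset_iff_of_subset]
  · refine ⟨k, hk, fun hk' ↦ (mem_missingOuter.1 hk').2 ⟨lastPartner q, Function.update_self ..⟩⟩
  · intro j hj
    obtain ⟨hj_ne, hj_range⟩ := mem_missingOuter.1 hj
    refine mem_missingOuter.2 ⟨hj_ne, ?_⟩
    rintro ⟨i, hi⟩
    refine hj_range ⟨i, ?_⟩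
    rw [Function.update_of_ne, hi]
    rintro rfl
    exact outerCities_ne_apply_lastPartner hf hj_ne hi.symm

theorem crossWeight_le_crossWeight_outerCities
    {D : Fin (q + 1 + r + q + 1) → Fin (q + 1 + r + q + 1) → ℝ} (hsymm : ∀ i j, D i j = D j i)
    (hK : qKalmanson q D) (hzero : ∀ i, D (Fin.last _) i = 0) (hg : Function.Injective g)
    (hlast : Fin.last _ ∈ Set.range g) :
    crossWeight q D g ≤ crossWeight q D (outerCities q r) := by
  induction hN : (missingOuter g).card using Nat.strong_induction_on generalizing g with
  | _ N ih =>
    subst hN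
    set f := g ∘ Tuple.sort g
    have hrange : Set.range f = Set.range g := EquivLike.range_comp g _
    have hf : StrictMono f := strictMono_comp_sort hg
    have hf_last : f (Fin.last _) = Fin.last _ := by
      obtain ⟨k, hk⟩ := hrange ▸ hlast
      exact Fin.last_le_iff.1 (hk ▸ hf.monotone (Fin.le_last k))
    have hf_zero : ∀ i, D (f (Fin.last _)) i = 0 := hf_last ▸ hzero
    refine (hK.crossWeight_le_sort hg).trans ?_
    rcases (missingOuter f).eq_empty_or_nonempty with hempty | ⟨k, hk⟩
    · refine (crossWeight_congr_of_ne_lastPartner hsymm hf_zero fun k hk ↦ ?_).ge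
      refine outerCities_eq_apply hf (fun j hj ↦ ?_) hk
      by_contra hj_range
      simpa [hempty] using mem_missingOuter.2 ⟨hj, hj_range⟩
    · set f' := Function.update f (lastPartner q) (outerCities q r k)
      have hf' : ∀ j ≠ lastPartner q, f' j = f j := fun j hj ↦ Function.update_of_ne hj _ _
      rw [← crossWeight_congr_of_ne_lastPartner hsymm hf_zero hf']
      refine ih _ ?_ (update_injective_of_notMem_range hf.injective _ (mem_missingOuter.1 hk).2)
        ⟨Fin.last _, (hf' _ (last_ne_lastPartner q)).trans hf_last⟩ rfl
      rw [← missingOuter_congr hrange]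
      exact Finset.card_lt_card (missingOuter_update_ssubset hf hk)

end Exchange

section Sums

variable {m : ℕ} {c : ℕ → ℕ}

theorem sum_range_comp_of_bijOn {M : Type*} [AddCommMonoid M]
    (hc : Set.BijOn c (Set.Iio m) (Set.Iio m)) (F : ℕ → M) :
    ∑ i ∈ Finset.range m, F (c i) = ∑ i ∈ Finset.range m, F i := by
  rw [← Finset.coe_range] at hc
  exact Finset.sum_nbij c hc.mapsTo hc.injOn hc.surjOn fun _ _ ↦ rfl

theorem bijOn_add_mod (m k : ℕ) : Set.BijOn (fun i ↦ (i + k) % m) (Set.Iio m) (Set.Iio m) :=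
  ((Set.finite_Iio m).injOn_iff_bijOn_of_mapsTo
    fun _ hi ↦ Nat.mod_lt _ (Nat.zero_lt_of_lt hi)).1
    fun _ hi _ hj h ↦ (Nat.ModEq.add_right_cancel' k h).eq_of_lt_of_lt hi hj

theorem exists_rotation_apply_eq (hc : Set.BijOn c (Set.Iio (m + 1)) (Set.Iio (m + 1))) :
    ∃ k, c ((m + k) % (m + 1)) = m := by
  obtain ⟨i, hi, hci⟩ := hc.surjOn (Set.mem_Iio.2 m.lt_succ_self)
  refine ⟨i + 1, ?_⟩
  rw [show m + (i + 1) = i + (m + 1) by ring, Nat.add_mod_right, Nat.mod_eq_of_lt hi, hci]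

theorem bijOn_Iio_of_bijOn_Iio_succ (hc : Set.BijOn c (Set.Iio (m + 1)) (Set.Iio (m + 1)))
    (hcm : c m = m) : Set.BijOn c (Set.Iio m) (Set.Iio m) := by
  have hIio : Set.Iio (m + 1) \ {m} = Set.Iio m := by
    rw [Set.Iio_add_one_eq_Iic, Set.Iic_sdiff_right]
  simpa only [hcm, hIio] using hc.sdiff_singleton (Set.mem_Iio.2 m.lt_succ_self)

end Sums

section Tours

variable {α : Type*} {D : α → α → ℝ}

/-- The total distance between cities `p` steps apart in the cyclic tour `c 0, …, c (m - 1)`. -/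
def lagWeight (D : α → α → ℝ) (m : ℕ) (c : ℕ → α) (p : ℕ) : ℝ :=
  ∑ i ∈ Finset.range m, D (c i) (c ((i + p) % m))

/-- The `q`-stripe objective of the cyclic tour `c 0, …, c (m - 1)`. Tours are sequences indexed by
`ℕ`, so that a tour and its truncation to fewer cities are the same function. -/
def stripeWeight (q : ℕ) (D : α → α → ℝ) (m : ℕ) (c : ℕ → α) : ℝ :=
  ∑ p ∈ Finset.range q, lagWeight D m c (p + 1)

theorem lagWeight_rotate (D : α → α → ℝ) (m : ℕ) (c : ℕ → α) (k p : ℕ) :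
    lagWeight D m (fun i ↦ c ((i + k) % m)) p = lagWeight D m c p := by
  rw [lagWeight, lagWeight,
    ← sum_range_comp_of_bijOn (bijOn_add_mod m k) fun i ↦ D (c i) (c ((i + p) % m))]
  simp only [Nat.mod_add_mod, add_right_comm]

theorem stripeWeight_rotate (q : ℕ) (D : α → α → ℝ) (m : ℕ) (c : ℕ → α) (k : ℕ) :
    stripeWeight q D m (fun i ↦ c ((i + k) % m)) = stripeWeight q D m c := by
  simp only [stripeWeight, lagWeight_rotate]

theorem lagWeight_zero (D : α → α → ℝ) (m : ℕ) (c : ℕ → α) :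
    lagWeight D m c 0 = ∑ i ∈ Finset.range m, D (c i) (c i) :=
  Finset.sum_congr rfl fun i hi ↦ by rw [add_zero, Nat.mod_eq_of_lt (Finset.mem_range.1 hi)]

theorem lagWeight_sub (hsymm : ∀ i j, D i j = D j i) {m p : ℕ} (hp : p ≤ m) (c : ℕ → α) :
    lagWeight D m c (m - p) = lagWeight D m c p := by
  rw [lagWeight, lagWeight, ← sum_range_comp_of_bijOn (bijOn_add_mod m p)]
  refine Finset.sum_congr rfl fun i hi ↦ ?_
  rw [Nat.mod_add_mod, add_assoc, Nat.add_sub_cancel' hp, Nat.add_mod_right,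
    Nat.mod_eq_of_lt (Finset.mem_range.1 hi), hsymm]

theorem sum_lagWeight (D : α → α → ℝ) (m : ℕ) (c : ℕ → α) :
    ∑ p ∈ Finset.range m, lagWeight D m c p =
      ∑ i ∈ Finset.range m, ∑ j ∈ Finset.range m, D (c i) (c j) := by
  simp only [lagWeight]
  rw [Finset.sum_comm]
  refine Finset.sum_congr rfl fun i _ ↦ ?_
  rw [← sum_range_comp_of_bijOn (bijOn_add_mod m i) fun j ↦ D (c i) (c j)]
  simp only [add_comm]

theorem two_mul_stripeWeight_two_mul_add_one (hsymm : ∀ i j, D i j = D j i) (q : ℕ) (c : ℕ → α) :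
    2 * stripeWeight q D (2 * q + 1) c =
      ∑ i ∈ Finset.range (2 * q + 1), ∑ j ∈ Finset.range (2 * q + 1), D (c i) (c j) -
        ∑ i ∈ Finset.range (2 * q + 1), D (c i) (c i) := by
  have hreflect : ∑ p ∈ Finset.range q, lagWeight D (2 * q + 1) c (q + p + 1) =
      stripeWeight q D (2 * q + 1) c := by
    rw [stripeWeight, ← Finset.sum_range_reflect]
    refine Finset.sum_congr rfl fun p hp ↦ ?_
    rw [Finset.mem_range] at hp
    rw [← lagWeight_sub hsymm (by lia)]
    congr 1
    lia
  rw [← sum_lagWeight D, ← lagWeight_zero D (2 * q + 1) c, Finset.sum_range_succ', two_mul q,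
    Finset.sum_range_add, ← two_mul q, hreflect, stripeWeight]
  ring

theorem lagWeight_add (D : α → α → ℝ) (s p : ℕ) (c : ℕ → α) :
    lagWeight D (s + p) c p =
      ∑ i ∈ Finset.range s, D (c i) (c (i + p)) + ∑ j ∈ Finset.range p, D (c (s + j)) (c j) := by
  rw [lagWeight, Finset.sum_range_add]
  congr! 3 with i hi j hj
  · rw [Nat.mod_eq_of_lt (by simpa using hi)]
  · rw [Finset.mem_range] at hj
    rw [add_right_comm, Nat.add_mod_left, Nat.mod_eq_of_lt (by lia)]

theorem stripeWeight_add_succ (D : α → α → ℝ) (q s : ℕ) (c : ℕ → α) :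
    stripeWeight q D (s + q + 1) c + ∑ j ∈ Finset.range q, D (c (s + j)) (c j) =
      stripeWeight q D (s + q) c +
        ∑ j ∈ Finset.range q, (D (c (s + j)) (c (s + q)) + D (c (s + q)) (c j)) := by
  induction q generalizing s with
  | zero => simp [stripeWeight]
  | succ q ih =>
    have hshift : s + 1 + q = s + (q + 1) := by ring
    have hsucc : ∀ m, stripeWeight (q + 1) D m c =
        stripeWeight q D m c + lagWeight D m c (q + 1) := fun m ↦ Finset.sum_range_succ ..
    have hlag := lagWeight_add D (s + 1) (q + 1) c
    have ih := ih (s + 1)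
    simp only [Finset.sum_add_distrib, hshift] at ih ⊢
    rw [show s + 1 + (q + 1) = s + (q + 1) + 1 by ring, Finset.sum_range_succ,
      Finset.sum_range_succ _ q, hshift] at hlag
    have hidx : ∀ j, s + 1 + j = s + (j + 1) := fun j ↦ by ring
    rw [hsucc, hsucc, hlag, lagWeight_add,
      Finset.sum_range_succ' (fun j ↦ D (c (s + j)) (c (s + (q + 1)))),
      Finset.sum_range_succ (fun j ↦ D (c (s + (q + 1))) (c j)), add_zero]
    simp only [hidx] at ih hlag ⊢
    linarith

end Tours

section Farris

/-- The Farris transform of `D` at `z`: subtracting from `D i j` a function of `i` and a function of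
`j` changes all matchings of the same points equally, and this choice annihilates row and column
`z`. -/
def farris {α : Type*} (D : α → α → ℝ) (z i j : α) : ℝ := D i j - D i z - D z j + D z z

variable {α : Type*} {D : α → α → ℝ}

theorem farris_self_left (D : α → α → ℝ) (z i : α) : farris D z z i = 0 := by
  rw [farris]
  ring

theorem farris_symm (hsymm : ∀ i j, D i j = D j i) (z i j : α) :
    farris D z i j = farris D z j i := by
  rw [farris, farris, hsymm i j, hsymm i z, hsymm z j]
  ring

protected theorem qKalmanson.farris {q n : ℕ} {D : Fin n → Fin n → ℝ} (hK : qKalmanson q D)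
    (z : Fin n) : qKalmanson q (farris D z) := by
  intro f hf σ hσ hσ_ne
  have hsum : ∀ τ : Equiv.Perm (Fin (2 * q + 2)), ∑ j, farris D z (f j) (f (τ j)) =
      ∑ j, D (f j) (f (τ j)) + ∑ j, (D z z - D (f j) z - D z (f j)) := fun τ ↦ by
    simp only [farris, Finset.sum_add_distrib, Finset.sum_sub_distrib,
      Equiv.sum_comp τ fun j ↦ D z (f j)]
    ring
  have hcross := hsum (crossShift_involutive q).toPerm
  simp only [Function.Involutive.coe_toPerm] at hcross
  rw [hsum, hcross]
  exact add_le_add_left (hK f hf σ hσ hσ_ne) _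

theorem stripeWeight_add_succ_eq_sub_sum_farris (D : α → α → ℝ) (q s : ℕ) (c : ℕ → α) :
    stripeWeight q D (s + q + 1) c =
      stripeWeight q D (s + q) c + q * D (c (s + q)) (c (s + q)) -
        ∑ j ∈ Finset.range q, farris D (c (s + q)) (c (s + j)) (c j) := by
  have := stripeWeight_add_succ D q s c
  simp only [farris, Finset.sum_add_distrib, Finset.sum_sub_distrib, Finset.sum_const,
    Finset.card_range, nsmul_eq_mul] at this ⊢
  linarith

end Farris

section Optimality

variable {q r : ℕ} {D : ℕ → ℕ → ℝ} {c : ℕ → ℕ}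

theorem crossWeight_comp_outerCities {E : ℕ → ℕ → ℝ} (hsymm : ∀ i j, E i j = E j i)
    (hzero : ∀ i, E (q + 1 + r + q) i = 0) (hcm : c (q + 1 + r + q) = q + 1 + r + q) :
    crossWeight q E (fun k ↦ c (outerCities q r k)) =
      2 * ∑ j ∈ Finset.range q, E (c (q + 1 + r + j)) (c j) := by
  have hlast : ∀ i, E (c (outerCities q r (Fin.last _))) i = 0 := by
    simpa only [outerCities_last, Fin.val_last, hcm] using hzero
  rw [crossWeight_eq_two_mul_sum_castSucc hsymm hlast,
    ← Fin.sum_univ_eq_sum_range fun j ↦ E (c (q + 1 + r + j)) (c j)]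
  simp only [val_outerCities_upperHalf_castSucc, val_outerCities_lowerHalf, Fin.val_castSucc]

theorem sum_farris_le (hsymm : ∀ i j, D i j = D j i)
    (hK : qKalmanson q fun i j : Fin (q + 1 + r + q + 1) ↦ D i j)
    (hc : Set.BijOn c (Set.Iio (q + 1 + r + q + 1)) (Set.Iio (q + 1 + r + q + 1)))
    (hcm : c (q + 1 + r + q) = q + 1 + r + q) :
    ∑ j ∈ Finset.range q, farris D (q + 1 + r + q) (c (q + 1 + r + j)) (c j) ≤
      ∑ j ∈ Finset.range q, farris D (q + 1 + r + q) (q + 1 + r + j) j := by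
  set m := q + 1 + r + q
  let E : Fin (m + 1) → Fin (m + 1) → ℝ := farris (fun i j : Fin (m + 1) ↦ D i j) (Fin.last m)
  let g : Fin (2 * q + 2) → Fin (m + 1) := fun k ↦
    ⟨c (outerCities q r k), hc.mapsTo (outerCities q r k).isLt⟩
  have hg : Function.Injective g := fun a b hab ↦ outerCities_strictMono.injective <|
    Fin.ext <| hc.injOn (outerCities q r a).isLt (outerCities q r b).isLt <| congrArg Fin.val hab
  have hg_last : g (Fin.last _) = Fin.last m := Fin.ext <| by
    simpa only [g, outerCities_last, Fin.val_last] using hcm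
  have hle := crossWeight_le_crossWeight_outerCities
    (farris_symm (fun i j : Fin (m + 1) ↦ hsymm i j) (Fin.last m)) (hK.farris (Fin.last m))
    (farris_self_left _ _) hg ⟨_, hg_last⟩
  have hcomp := crossWeight_comp_outerCities (r := r) (farris_symm hsymm m)
    (farris_self_left D m) hcm
  have hid := crossWeight_comp_outerCities (r := r) (c := id) (farris_symm hsymm m)
    (farris_self_left D m) rfl
  have := calc
    2 * ∑ j ∈ Finset.range q, farris D m (c (q + 1 + r + j)) (c j) = crossWeight q E g := hcomp.symm
    _ ≤ crossWeight q E (outerCities q r) := hle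
    _ = 2 * ∑ j ∈ Finset.range q, farris D m (q + 1 + r + j) j := hid
  linarith

theorem stripeWeight_two_mul_add_one_eq (hsymm : ∀ i j, D i j = D j i)
    (hc : Set.BijOn c (Set.Iio (2 * q + 1)) (Set.Iio (2 * q + 1))) :
    stripeWeight q D (2 * q + 1) c = stripeWeight q D (2 * q + 1) id := by
  have hcomp := two_mul_stripeWeight_two_mul_add_one hsymm q c
  have hid := two_mul_stripeWeight_two_mul_add_one hsymm q id
  rw [sum_range_comp_of_bijOn hc fun i ↦ D i i,
    sum_range_comp_of_bijOn hc fun i ↦ ∑ j ∈ Finset.range (2 * q + 1), D i (c j)] at hcomp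
  simp only [sum_range_comp_of_bijOn hc, id] at hcomp hid
  linarith

theorem stripeWeight_id_le {m : ℕ} (hm : 2 * q + 1 ≤ m) (hsymm : ∀ i j, D i j = D j i)
    (hK : qKalmanson q fun i j : Fin m ↦ D i j) (hc : Set.BijOn c (Set.Iio m) (Set.Iio m)) :
    stripeWeight q D m id ≤ stripeWeight q D m c := by
  induction m, hm using Nat.le_induction generalizing c with
  | base => exact (stripeWeight_two_mul_add_one_eq hsymm hc).ge
  | succ m hm ih =>
    obtain ⟨k, hk⟩ := exists_rotation_apply_eq hc
    rw [← stripeWeight_rotate q D (m + 1) c k]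
    set c' : ℕ → ℕ := fun i ↦ c ((i + k) % (m + 1))
    have hc' : Set.BijOn c' (Set.Iio (m + 1)) (Set.Iio (m + 1)) := hc.comp (bijOn_add_mod _ k)
    have hKm : qKalmanson q fun i j : Fin m ↦ D i j := fun f hf ↦
      hK (fun j ↦ (f j).castSucc) (Fin.strictMono_castSucc.comp hf)
    have hle := ih hKm (bijOn_Iio_of_bijOn_Iio_succ hc' hk)
    obtain ⟨r, rfl⟩ : ∃ r, m = q + 1 + r + q := ⟨m - (2 * q + 1), by lia⟩
    have hc'_last : c' (q + 1 + r + q) = q + 1 + r + q := hk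
    have hfarris := sum_farris_le hsymm hK hc' hc'_last
    rw [stripeWeight_add_succ_eq_sub_sum_farris, stripeWeight_add_succ_eq_sub_sum_farris, hc'_last]
    simp only [id]
    linarith

end Optimality

theorem stripeObj_eq_stripeWeight (q : ℕ) {n : ℕ} [NeZero n] (D : Fin n → Fin n → ℝ)
    {π : Equiv.Perm (Fin n)} {c : ℕ → ℕ} (hc : ∀ i, Fin.ofNat n (c i) = π (Fin.ofNat n i)) :
    stripeObj q D π = stripeWeight q (fun i j ↦ D (Fin.ofNat n i) (Fin.ofNat n j)) n c := by
  rw [stripeObj, stripeWeight, ← Finset.Ico_add_one_right_eq_Icc, Finset.sum_Ico_eq_sum_range]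
  simp only [lagWeight, Nat.add_sub_cancel, add_comm 1, hc]
  refine Finset.sum_congr rfl fun p _ ↦ ?_
  rw [← Fin.sum_univ_eq_sum_range fun i ↦
    D (π (Fin.ofNat n i)) (π (Fin.ofNat n ((i + (p + 1)) % n)))]
  simp only [finShift, Fin.ofNat, Nat.mod_mod, Nat.mod_eq_of_lt (Fin.isLt _)]

theorem bijOn_val_apply_ofNat {n : ℕ} [NeZero n] (π : Equiv.Perm (Fin n)) :
    Set.BijOn (fun i ↦ (π (Fin.ofNat n i) : ℕ)) (Set.Iio n) (Set.Iio n) :=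
  ((Set.finite_Iio n).injOn_iff_bijOn_of_mapsTo fun _ _ ↦ Fin.isLt _).1 fun _ hi _ hj hij ↦
    Nat.ModEq.eq_of_lt_of_lt (congrArg Fin.val (π.injective (Fin.ext hij))) hi hj

/-- Theorem (main result): for `q ≥ 1` and a symmetric `q`-Kalmanson `n×n` matrix with
`n ≥ 2q+1`, the identity permutation minimizes the `q`-stripe TSP objective. -/
theorem qStripe_identity_optimal_of_qKalmanson
    (q n : ℕ) (hq : 1 ≤ q) (hn : 2*q+1 ≤ n)
    (D : Fin n → Fin n → ℝ) (hsymm : ∀ i j, D i j = D j i)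
    (hK : qKalmanson q D) (π : Equiv.Perm (Fin n)) :
    stripeObj q D (Equiv.refl (Fin n)) ≤ stripeObj q D π := by
  have : NeZero n := ⟨by lia⟩
  rw [stripeObj_eq_stripeWeight q D (c := id) fun _ ↦ rfl,
    stripeObj_eq_stripeWeight q D (c := fun i ↦ π (Fin.ofNat n i)) fun _ ↦ Fin.ofNat_val_eq_self _]
  refine stripeWeight_id_le hn (fun _ _ ↦ hsymm _ _) ?_ (bijOn_val_apply_ofNat π)
  simpa only [Fin.ofNat_val_eq_self] using hK
end

section
/- For every integer q ≥ 1, every symmetric q-Kalmanson n×n real matrix is also a (q+1)-Kalmanson matrix. -/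
/-!
Fix one chord of a matching of `2q + 4` points and replace the matching of the other `2q + 2`
points by their fully crossing one. As `D` is `q`-Kalmanson, this does not decrease the weight.
Three such exchanges lead from any matching to the fully crossing one. The first fixes the chord at
`0`. If that chord is the diameter `{0, q + 2}`, the outcome is already fully crossing. Otherwise
the outcome has a chord crossing this diameter. Removing that chord leaves `q` points on either side
of the diameter, so the second exchange produces the diameter, and the third one fixes it.
-/

open Function

section PerfectMatching

variable {α M : Type*}

/-- A perfect matching of `α`, encoded as the map sending each point to its partner. -/
structure IsPerfectMatching (s : α → α) : Prop where
  involutive : Involutive s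
  apply_ne : ∀ x, s x ≠ x

/-- The weight of the matching `s` with respect to the distances `D`; every chord is counted twice,
once from each endpoint. -/
def matchingWeight [Fintype α] [AddCommMonoid M] (D : α → α → M) (s : α → α) : M :=
  ∑ x, D x (s x)

end PerfectMatching

section AddChord

variable {m : ℕ} {M : Type*} (i : Fin (m + 2)) (j : Fin (m + 1))

/-- The increasing enumeration of the points other than `i` and `i.succAbove j`. Every pair of
distinct points of `Fin (m + 2)` has this form, whatever its order. -/
def skipTwo : Fin m → Fin (m + 2) :=
  i.succAbove ∘ j.succAbove

/-- The matching `t` of the points enumerated by `skipTwo i j`, completed to `Fin (m + 2)` by the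
chord `{i, i.succAbove j}`. -/
def addChord (t : Fin m → Fin m) : Fin (m + 2) → Fin (m + 2) :=
  i.insertNth (i.succAbove j) (j.insertNth i (skipTwo i j ∘ t))

lemma skipTwo_strictMono : StrictMono (skipTwo i j) :=
  i.strictMono_succAbove.comp j.strictMono_succAbove

lemma skipTwo_zero_val (k : Fin m) :
    (skipTwo 0 j k).val = if k.val < j.val then k.val + 1 else k.val + 2 := by
  simp only [skipTwo, comp_apply, Fin.succAbove, Fin.lt_def, Fin.val_castSucc, Fin.val_zero]
  split_ifs <;> simp_all

variable {i j} in
lemma skipTwo_val_of_lt (hji : j.val < i.val) (k : Fin m) :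
    (skipTwo i j k).val =
      if k.val < j.val then k.val else if k.val + 1 < i.val then k.val + 1 else k.val + 2 := by
  simp only [skipTwo, comp_apply, Fin.succAbove, Fin.lt_def, Fin.val_castSucc]
  grind

lemma forall_iff_skipTwo {P : Fin (m + 2) → Prop} :
    (∀ x, P x) ↔ P i ∧ P (i.succAbove j) ∧ ∀ k, P (skipTwo i j k) := by
  rw [Fin.forall_iff_succAbove i, Fin.forall_iff_succAbove j]
  rfl

lemma exists_skipTwo_eq {x : Fin (m + 2)} (hi : x ≠ i) (hj : x ≠ i.succAbove j) :
    ∃ k, skipTwo i j k = x := by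
  obtain ⟨y, rfl⟩ := Fin.exists_succAbove_eq hi
  obtain ⟨k, rfl⟩ := Fin.exists_succAbove_eq (ne_of_apply_ne i.succAbove hj)
  exact ⟨k, rfl⟩

variable (t : Fin m → Fin m)

@[simp]
lemma addChord_left : addChord i j t i = i.succAbove j := by
  simp [addChord]

@[simp]
lemma addChord_right : addChord i j t (i.succAbove j) = i := by
  simp [addChord]

@[simp]
lemma addChord_skipTwo (k : Fin m) : addChord i j t (skipTwo i j k) = skipTwo i j (t k) := by
  simp [addChord, skipTwo]

variable {i j t}

lemma IsPerfectMatching.exists_eq_addChord {s : Fin (m + 2) → Fin (m + 2)}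
    (hs : IsPerfectMatching s) (hij : s i = i.succAbove j) :
    ∃ t, IsPerfectMatching t ∧ s = addChord i j t := by
  have hji : s (i.succAbove j) = i := by rw [← hij, hs.involutive]
  have hinj := (skipTwo_strictMono i j).injective
  have hrest (k : Fin m) : ∃ l, skipTwo i j l = s (skipTwo i j k) := by
    apply exists_skipTwo_eq
    · exact ne_of_ne_of_eq
        (hs.involutive.injective.ne (i.succAbove_right_injective.ne (j.succAbove_ne k))) hji
    · exact ne_of_ne_of_eq (hs.involutive.injective.ne (i.succAbove_ne _)) hij
  choose t ht using hrest
  refine ⟨t, ⟨fun k ↦ hinj ?_, fun k hk ↦ hs.apply_ne (skipTwo i j k) ?_⟩, funext ?_⟩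
  · rw [ht, ht, hs.involutive]
  · rw [← ht, hk]
  · exact (forall_iff_skipTwo i j).2 (by simp [hij, hji, ht])

lemma IsPerfectMatching.addChord (ht : IsPerfectMatching t) :
    IsPerfectMatching (addChord i j t) where
  involutive := (forall_iff_skipTwo i j).2 (by simp [ht.involutive _])
  apply_ne := (forall_iff_skipTwo i j).2
    (by simp [(skipTwo_strictMono i j).injective.eq_iff, ht.apply_ne, Fin.succAbove_ne,
      Fin.ne_succAbove])

lemma matchingWeight_addChord [AddCommMonoid M] (D : Fin (m + 2) → Fin (m + 2) → M) :
    matchingWeight D (addChord i j t) =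
      D i (i.succAbove j) + (D (i.succAbove j) i +
        matchingWeight (fun k l ↦ D (skipTwo i j k) (skipTwo i j l)) t) := by
  simp_rw [matchingWeight, Fin.sum_univ_succAbove _ i, Fin.sum_univ_succAbove _ j, addChord_left,
    addChord_right, ← addChord_skipTwo]
  rfl

end AddChord

section CrossShift

variable {q : ℕ}

lemma crossShift_val (j : Fin (2 * q + 2)) :
    (crossShift q j).val = if j.val < q + 1 then j.val + (q + 1) else j.val - (q + 1) := by
  have hj := j.isLt
  unfold crossShift
  split_ifs with h
  · exact Nat.mod_eq_of_lt (by omega)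
  · dsimp only
    rw [Nat.mod_eq_sub_mod (by omega), Nat.mod_eq_of_lt (by omega)]
    omega

lemma isPerfectMatching_crossShift (q : ℕ) : IsPerfectMatching (crossShift q) where
  involutive j := by
    ext
    simp only [crossShift_val]
    split_ifs <;> omega
  apply_ne j := by
    rw [Ne, Fin.ext_iff, crossShift_val]
    split_ifs <;> omega

lemma addChord_diameter_crossShift (q : ℕ) :
    addChord 0 ⟨q + 1, by omega⟩ (crossShift q) = crossShift (q + 1) := by
  refine funext ((forall_iff_skipTwo 0 ⟨q + 1, by omega⟩).2 ⟨?_, ?_, fun k ↦ ?_⟩) <;> ext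
  · simp [crossShift_val]
  · rw [addChord_right]
    simp [crossShift_val]
  · rw [addChord_skipTwo]
    simp only [crossShift_val, skipTwo_zero_val]
    split_ifs <;> omega

lemma addChord_crossShift_zero {i : Fin (2 * q + 2 + 2)} {j : Fin (2 * q + 2 + 1)}
    (hpos : 0 < (i.succAbove j).val) (hlt : (i.succAbove j).val < q + 2) (hi : q + 2 < i.val) :
    addChord i j (crossShift q) 0 = Fin.succAbove 0 ⟨q + 1, by omega⟩ := by
  have hj : i.succAbove j = j.castSucc :=
    i.succAbove_of_castSucc_lt j ((i.succAbove_lt_iff_castSucc_lt j).1 (hlt.trans hi))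
  rw [hj, Fin.val_castSucc] at hpos hlt
  have hji : j.val < i.val := hlt.trans hi
  have hzero : skipTwo i j 0 = 0 := by
    ext
    simp [skipTwo_val_of_lt hji, hpos]
  have hmid : skipTwo i j (crossShift q 0) = Fin.succAbove 0 ⟨q + 1, by omega⟩ := by
    ext
    simp [skipTwo_val_of_lt hji, crossShift_val, show ¬q + 1 < j.val by omega, hi]
  rw [← hmid, ← addChord_skipTwo, hzero]

lemma exists_addChord_zero_crossShift_lt (hq : 1 ≤ q) {k : Fin (2 * q + 2 + 1)}
    (hk : k.val ≠ q + 1) :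
    ∃ i : Fin (2 * q + 2 + 2), 0 < (addChord 0 k (crossShift q) i).val ∧
      (addChord 0 k (crossShift q) i).val < q + 2 ∧ q + 2 < i.val := by
  suffices ∃ l : Fin (2 * q + 2), 0 < (skipTwo 0 k (crossShift q l)).val ∧
      (skipTwo 0 k (crossShift q l)).val < q + 2 ∧ q + 2 < (skipTwo 0 k l).val by
    obtain ⟨l, hl⟩ := this
    exact ⟨skipTwo 0 k l, by rwa [addChord_skipTwo]⟩
  -- With `0` and `k + 1 < q + 2` deleted, the first remaining point has partner `q + 3`. If
  -- `k + 1 > q + 2`, its partner is the end `q + 2` of the diameter, so the second point is taken.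
  rcases lt_or_gt_of_ne hk with hk | hk
  · refine ⟨⟨q + 1, by omega⟩, ?_⟩
    simp only [crossShift_val, skipTwo_zero_val]
    split_ifs <;> omega
  · refine ⟨⟨q + 2, by omega⟩, ?_⟩
    simp only [crossShift_val, skipTwo_zero_val]
    split_ifs <;> omega

end CrossShift

namespace qKalmanson

variable {q n : ℕ}

lemma comp {m : ℕ} {D : Fin n → Fin n → ℝ} (hK : qKalmanson q D) {f : Fin m → Fin n}
    (hf : StrictMono f) : qKalmanson q (fun i j ↦ D (f i) (f j)) :=
  fun g hg ↦ hK (f ∘ g) (hf.comp hg)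

lemma matchingWeight_le_crossShift {D : Fin (2 * q + 2) → Fin (2 * q + 2) → ℝ}
    (hK : qKalmanson q D) {s : Fin (2 * q + 2) → Fin (2 * q + 2)}
    (hs : IsPerfectMatching s) : matchingWeight D s ≤ matchingWeight D (crossShift q) :=
  hK id strictMono_id hs.involutive.toPerm hs.involutive hs.apply_ne

variable {D : Fin (2 * q + 2 + 2) → Fin (2 * q + 2 + 2) → ℝ}
  {s : Fin (2 * q + 2 + 2) → Fin (2 * q + 2 + 2)}

lemma matchingWeight_le_addChord (hK : qKalmanson q D) (hs : IsPerfectMatching s)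
    {i : Fin (2 * q + 2 + 2)} {j : Fin (2 * q + 2 + 1)} (hij : s i = i.succAbove j) :
    matchingWeight D s ≤ matchingWeight D (addChord i j (crossShift q)) := by
  obtain ⟨t, ht, rfl⟩ := hs.exists_eq_addChord hij
  rw [matchingWeight_addChord, matchingWeight_addChord]
  gcongr
  exact (hK.comp (skipTwo_strictMono i j)).matchingWeight_le_crossShift ht

lemma matchingWeight_le_of_diameter (hK : qKalmanson q D) (hs : IsPerfectMatching s)
    (hdiam : s 0 = Fin.succAbove 0 ⟨q + 1, by omega⟩) :
    matchingWeight D s ≤ matchingWeight D (crossShift (q + 1)) :=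
  addChord_diameter_crossShift q ▸ hK.matchingWeight_le_addChord hs hdiam

lemma matchingWeight_le_of_crosses_diameter (hK : qKalmanson q D) (hs : IsPerfectMatching s)
    {i : Fin (2 * q + 2 + 2)} (hpos : 0 < (s i).val) (hlt : (s i).val < q + 2)
    (hi : q + 2 < i.val) :
    matchingWeight D s ≤ matchingWeight D (crossShift (q + 1)) := by
  obtain ⟨j, hj⟩ := Fin.exists_succAbove_eq (hs.apply_ne i)
  rw [← hj] at hpos hlt
  calc
    matchingWeight D s ≤ matchingWeight D (addChord i j (crossShift q)) :=
      hK.matchingWeight_le_addChord hs hj.symm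
    _ ≤ matchingWeight D (crossShift (q + 1)) :=
      hK.matchingWeight_le_of_diameter (isPerfectMatching_crossShift q).addChord
        (addChord_crossShift_zero hpos hlt hi)

lemma matchingWeight_le_crossShift_succ (hq : 1 ≤ q) (hK : qKalmanson q D)
    (hs : IsPerfectMatching s) :
    matchingWeight D s ≤ matchingWeight D (crossShift (q + 1)) := by
  obtain ⟨k, hk⟩ := Fin.exists_succAbove_eq (hs.apply_ne 0)
  by_cases hdiam : k.val = q + 1
  · apply hK.matchingWeight_le_of_diameter hs
    rw [← hk, Fin.eq_mk_iff_val_eq.2 hdiam]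
  · obtain ⟨i, hpos, hlt, hi⟩ := exists_addChord_zero_crossShift_lt hq hdiam
    calc
      matchingWeight D s ≤ matchingWeight D (addChord 0 k (crossShift q)) :=
        hK.matchingWeight_le_addChord hs hk.symm
      _ ≤ matchingWeight D (crossShift (q + 1)) :=
        hK.matchingWeight_le_of_crosses_diameter (isPerfectMatching_crossShift q).addChord
          hpos hlt hi

end qKalmanson

theorem qKalmanson_subset_succ_general {q n : ℕ} (hq : 1 ≤ q) {D : Fin n → Fin n → ℝ}
    (hK : qKalmanson q D) : qKalmanson (q + 1) D :=
  fun _ hf _ hσ hne ↦ (hK.comp hf).matchingWeight_le_crossShift_succ hq ⟨hσ, hne⟩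

/-- Lemma 3.2 (subset relation): every symmetric `q`-Kalmanson matrix is also a
`(q+1)`-Kalmanson matrix. -/
theorem qKalmanson_subset_succ (q n : ℕ) (hq : 1 ≤ q)
    (D : Fin n → Fin n → ℝ) (hsymm : ∀ i j, D i j = D j i)
    (hK : qKalmanson q D) :
    qKalmanson (q+1) D :=
  qKalmanson_subset_succ_general hq hK
end

section
/- Let q ≥ 1, n ≥ 2q+1, and let D be a symmetric q-Kalmanson n×n real matrix. Fix a city x, and for pairwise distinct cities y_1,…,y_{2q}, all distinct from x, define f_x(y_1,…,y_{2q}) = Σ_{i=1}^{2q} d(x,y_i) − CrossMatch({y_1,…,y_{2q}}). Then f_x is minimized by the set consisting of the q cities directly preceding x and the q cities directly succeeding x in the circular arrangement 1,…,n (i.e. the cities x−q,…,x−1,x+1,…,x+q taken modulo n): the value of f_x on this set is at most the value of f_x on any other admissible 2q-tuple. -/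
/-- The weight of the fully crossing matching of `2k` cities listed in increasing
order by `g`: the sum of `d` over the `k` pairs `{g(j), g(j+k)}`, `j = 0,…,k−1`. -/
noncomputable def crossMatch (k : ℕ) {n : ℕ} (D : Fin n → Fin n → ℝ)
    (g : Fin (2*k) → Fin n) : ℝ :=
  ∑ j : Fin k, D (g ⟨j.val, by have := j.isLt; omega⟩) (g ⟨j.val + k, by have := j.isLt; omega⟩)

/-!
Let `U` be a set of `2q + 2` cities containing `x`, and delete from it `x` together with a
second city `z`. Up to an additive constant depending only on `U` and `x`, the value of `f_x`
on what remains is the negative of the weight of the matching of `U` that consists of `{x, z}`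
and the fully crossing matching of the rest. By the Kalmanson property this value is smallest
when that matching is the fully crossing one of `U`, that is, when `z` is the antipode of `x`
in `U`. Exactly `q` cities of `U` lie strictly between `x` and its antipode on either side, so
the antipode is never a city at most `q` steps away from `x`. Hence adding a missing cyclic
neighbour of `x` to a `2q`-tuple and dropping the antipode of `x` does not increase `f_x`, and
repeating this ends at the set of all cyclic neighbours.
-/

section MonotoneTuples

lemma strictMono_eq_of_range_subset {ι α : Type*} [LinearOrder ι] [Finite ι] [PartialOrder α]
    {f g : ι → α} (hf : StrictMono f) (hg : StrictMono g) (h : Set.range f ⊆ Set.range g) :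
    f = g := by
  refine (hf.range_inj hg).1 (Set.eq_of_subset_of_ncard_le h ?_)
  rw [Set.ncard_range_of_injective hf.injective, Set.ncard_range_of_injective hg.injective]

lemma val_sub_val_le_of_strictMono {m n : ℕ} {f : Fin m → Fin n} (hf : StrictMono f)
    (i j : Fin m) : j.val - i ≤ f j - f i := by
  rw [← Fin.card_Ico, ← Fin.card_Ico]
  exact Finset.card_le_card_of_injOn f
    (fun a ha => by simpa [hf.le_iff_le, hf.lt_iff_lt] using ha) hf.injective.injOn

end MonotoneTuples

section Halves

/-- The two halves of the positions `0, …, 2k - 1`: `inl j` is position `j` and `inr j` is position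
`k + j`, so that `Sum.swap` exchanges the partners of the fully crossing matching. -/
def halves (k : ℕ) : Fin k ⊕ Fin k ≃ Fin (2 * k) :=
  finSumFinEquiv.trans (finCongr (two_mul k).symm)

@[simp]
lemma val_halves_inl {k : ℕ} (j : Fin k) : (halves k (.inl j)).val = j := by
  simp [halves]

@[simp]
lemma val_halves_inr {k : ℕ} (j : Fin k) : (halves k (.inr j)).val = k + j := by
  simp [halves, add_comm]

lemma sum_eq_sum_halves {M : Type*} [AddCommMonoid M] {k : ℕ} (h : Fin (2 * k) → M) :
    ∑ i, h i = ∑ j, h (halves k (.inl j)) + ∑ j, h (halves k (.inr j)) := by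
  rw [← (halves k).sum_comp, Fintype.sum_sum_type]

lemma crossMatch_eq_sum_halves {k n : ℕ} (D : Fin n → Fin n → ℝ) (g : Fin (2 * k) → Fin n) :
    crossMatch k D g = ∑ j, D (g (halves k (.inl j))) (g (halves k (.inr j))) := by
  refine Finset.sum_congr rfl fun j _ => ?_
  congr 2
  ext
  simp [add_comm]

end Halves

section CrossingPermutation

/-- The fully crossing matching of `2k` positions, as a fixed-point-free involution. -/
def crossPerm (k : ℕ) : Equiv.Perm (Fin (2 * k)) :=
  (halves k).permCongr (Equiv.sumComm _ _)

@[simp]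
lemma crossPerm_halves {k : ℕ} (s : Fin k ⊕ Fin k) :
    crossPerm k (halves k s) = halves k s.swap := by
  simp [crossPerm, Equiv.permCongr_apply]

lemma crossPerm_crossPerm {k : ℕ} (i : Fin (2 * k)) : crossPerm k (crossPerm k i) = i := by
  obtain ⟨s, rfl⟩ := (halves k).surjective i
  simp

lemma crossPerm_ne {k : ℕ} (i : Fin (2 * k)) : crossPerm k i ≠ i := by
  obtain ⟨j | j, rfl⟩ := (halves k).surjective i <;> simp

lemma crossShift_eq_crossPerm (q : ℕ) (i : Fin (2 * (q + 1))) :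
    crossShift q i = crossPerm (q + 1) i := by
  obtain ⟨j | j, rfl⟩ := (halves (q + 1)).surjective i <;> ext
  · simp only [crossShift, crossPerm_halves, Sum.swap_inl, val_halves_inl, val_halves_inr]
    rw [Nat.mod_eq_of_lt (by omega), add_comm]
  · simp only [crossShift, crossPerm_halves, Sum.swap_inr, val_halves_inl, val_halves_inr]
    rw [show q + 1 + j.val + (q + 1) = j.val + (2 * q + 2) by ring, Nat.add_mod_right,
      Nat.mod_eq_of_lt (by omega)]

lemma sum_crossPerm_eq_two_mul_crossMatch {k n : ℕ} {D : Fin n → Fin n → ℝ}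
    (hsymm : ∀ i j, D i j = D j i) (g : Fin (2 * k) → Fin n) :
    ∑ i, D (g i) (g (crossPerm k i)) = 2 * crossMatch k D g := by
  simp only [sum_eq_sum_halves, crossPerm_halves, Sum.swap_inl, Sum.swap_inr,
    crossMatch_eq_sum_halves, two_mul]
  exact congrArg _ (Finset.sum_congr rfl fun j _ => hsymm _ _)

-- An unsorted tuple encodes an arbitrary perfect matching of its entries, pairing `w j` with
-- `w (q + 1 + j)`; so this is the Kalmanson inequality with each pair counted once.
lemma crossMatch_le_crossMatch_comp_sort {q n : ℕ} {D : Fin n → Fin n → ℝ}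
    (hsymm : ∀ i j, D i j = D j i) (hK : qKalmanson q D) {w : Fin (2 * (q + 1)) → Fin n}
    (hw : Function.Injective w) :
    crossMatch (q + 1) D w ≤ crossMatch (q + 1) D (w ∘ Tuple.sort w) := by
  set ρ := Tuple.sort w
  have hsorted : StrictMono (w ∘ ρ) :=
    (Tuple.monotone_sort w).strictMono_of_injective (hw.comp ρ.injective)
  let σ : Equiv.Perm (Fin (2 * (q + 1))) := ρ.symm.permCongr (crossPerm (q + 1))
  have hσ (i) : ρ (σ i) = crossPerm (q + 1) (ρ i) := by simp [σ]
  have hinvol (i) : σ (σ i) = i := ρ.injective (by rw [hσ, hσ, crossPerm_crossPerm])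
  have hfixfree (i) : σ i ≠ i := fun h => crossPerm_ne (ρ i) (by rw [← hσ, h])
  have hmatching : ∑ i, D ((w ∘ ρ) i) ((w ∘ ρ) (σ i)) = 2 * crossMatch (q + 1) D w := by
    simp only [Function.comp_apply, hσ]
    rw [Equiv.sum_comp ρ fun i => D (w i) (w (crossPerm (q + 1) i)),
      sum_crossPerm_eq_two_mul_crossMatch hsymm]
  have hcrossing : ∑ i, D ((w ∘ ρ) i) ((w ∘ ρ) (crossShift q i)) =
      2 * crossMatch (q + 1) D (w ∘ ρ) := by
    rw [← sum_crossPerm_eq_two_mul_crossMatch hsymm]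
    exact Finset.sum_congr rfl fun i _ => by rw [crossShift_eq_crossPerm]
  have hle : 2 * crossMatch (q + 1) D w ≤ 2 * crossMatch (q + 1) D (w ∘ ρ) :=
    hmatching.symm.le.trans ((hK _ hsorted σ hinvol hfixfree).trans hcrossing.le)
  linarith

end CrossingPermutation

section DeletePair

variable {q : ℕ}

/-- The increasing enumeration of the positions `0, …, 2q + 1` other than `halves (q + 1) s` and its
crossing partner: composing a tuple with it deletes that pair of entries. -/
def deletePair (s : Fin (q + 1) ⊕ Fin (q + 1)) : Fin (2 * q) → Fin (2 * (q + 1)) :=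
  let j := s.elim id id
  halves (q + 1) ∘ Sum.map j.succAbove j.succAbove ∘ (halves q).symm

lemma strictMono_deletePair (s : Fin (q + 1) ⊕ Fin (q + 1)) : StrictMono (deletePair s) := by
  intro a b hab
  obtain ⟨a, rfl⟩ := (halves q).surjective a
  obtain ⟨b, rfl⟩ := (halves q).surjective b
  have hmono := Fin.strictMono_succAbove (s.elim id id)
  rcases a with a | a <;> rcases b with b | b <;>
    simp only [Fin.lt_def, val_halves_inl, val_halves_inr, deletePair, Function.comp_apply,
      Equiv.symm_apply_apply, Sum.map_inl, Sum.map_inr] at hab ⊢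
  · exact hmono hab
  · omega
  · omega
  · exact Nat.add_lt_add_left (hmono (Nat.lt_of_add_lt_add_left hab)) _

lemma range_deletePair (s : Fin (q + 1) ⊕ Fin (q + 1)) :
    Set.range (deletePair s) = {halves (q + 1) s, halves (q + 1) s.swap}ᶜ := by
  have hpair : {s, s.swap}ᶜ =
      Set.range (Sum.map (s.elim id id).succAbove (s.elim id id).succAbove) := by
    ext t
    rcases s with j | j <;> rcases t with t | t <;> simp [Fin.exists_succAbove_eq_iff]
  simp only [deletePair, Set.range_comp, (halves q).symm.surjective.range_eq, Set.image_univ,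
    ← hpair, Set.image_compl_eq (halves (q + 1)).bijective, Set.image_pair]

lemma range_comp_deletePair {α : Type*} {f : Fin (2 * (q + 1)) → α} (hf : Function.Injective f)
    (s : Fin (q + 1) ⊕ Fin (q + 1)) :
    Set.range (f ∘ deletePair s) =
      Set.range f \ {f (halves (q + 1) s), f (halves (q + 1) s.swap)} := by
  rw [Set.range_comp, range_deletePair, Set.image_compl_eq_range_sdiff_image hf, Set.image_pair]

lemma sum_eq_add_add_sum_deletePair {M : Type*} [AddCommMonoid M] (h : Fin (2 * (q + 1)) → M)
    (s : Fin (q + 1) ⊕ Fin (q + 1)) :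
    ∑ i, h i =
      h (halves (q + 1) s) + h (halves (q + 1) s.swap) + ∑ i, h (deletePair s i) := by
  rw [sum_eq_sum_halves, sum_eq_sum_halves]
  rcases s with j | j <;>
    simp only [Fin.sum_univ_succAbove _ j, deletePair, Function.comp_apply, Equiv.symm_apply_apply,
      Sum.elim_inl, Sum.elim_inr, id_eq, Sum.map_inl, Sum.map_inr, Sum.swap_inl, Sum.swap_inr]
  · abel
  · abel

lemma crossMatch_eq_add_crossMatch_deletePair {n : ℕ} {D : Fin n → Fin n → ℝ}
    (hsymm : ∀ i j, D i j = D j i) (f : Fin (2 * (q + 1)) → Fin n)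
    (s : Fin (q + 1) ⊕ Fin (q + 1)) :
    crossMatch (q + 1) D f =
      D (f (halves (q + 1) s)) (f (halves (q + 1) s.swap)) + crossMatch q D (f ∘ deletePair s) := by
  rw [crossMatch_eq_sum_halves, crossMatch_eq_sum_halves]
  rcases s with j | j <;>
    simp only [Fin.sum_univ_succAbove _ j, deletePair, Function.comp_apply, Equiv.symm_apply_apply,
      Sum.elim_inl, Sum.elim_inr, id_eq, Sum.map_inl, Sum.map_inr, Sum.swap_inl, Sum.swap_inr]
  rw [hsymm]

lemma exists_comp_deletePair_eq {α : Type*} {g : Fin (2 * q) → α} (hg : Function.Injective g)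
    {x z : α} (hx : x ∉ Set.range g) (hz : z ∉ Set.range g) (hxz : x ≠ z) :
    ∃ w : Fin (2 * (q + 1)) → α, Function.Injective w ∧ w (halves (q + 1) (.inl 0)) = x ∧
      w (halves (q + 1) (.inr 0)) = z ∧ w ∘ deletePair (.inl 0) = g := by
  let lower : Fin (q + 1) → α := Fin.cons x (g ∘ halves q ∘ Sum.inl)
  let upper : Fin (q + 1) → α := Fin.cons z (g ∘ halves q ∘ Sum.inr)
  have hlower : Function.Injective lower := Fin.cons_injective_iff.2
    ⟨fun ⟨j, hj⟩ => hx ⟨_, hj⟩, hg.comp ((halves q).injective.comp Sum.inl_injective)⟩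
  have hupper : Function.Injective upper := Fin.cons_injective_iff.2
    ⟨fun ⟨j, hj⟩ => hz ⟨_, hj⟩, hg.comp ((halves q).injective.comp Sum.inr_injective)⟩
  have hdisjoint (i j) : lower i ≠ upper j := by
    cases i using Fin.cases <;> cases j using Fin.cases
    · exact hxz
    · exact fun h => hx ⟨_, h.symm⟩
    · exact fun h => hz ⟨_, h⟩
    · exact hg.ne ((halves q).injective.ne Sum.inl_ne_inr)
  refine ⟨Sum.elim lower upper ∘ (halves (q + 1)).symm,
    (hlower.sumElim hupper hdisjoint).comp (halves (q + 1)).symm.injective,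
    by simp [lower], by simp [upper], ?_⟩
  ext i
  obtain ⟨j | j, rfl⟩ := (halves q).surjective i <;> simp [deletePair, lower, upper]

end DeletePair

section StarCost

variable {q n : ℕ} {D : Fin n → Fin n → ℝ}

/-- The function `f_x` of the paper: the weight of the star joining `x` to the entries of `g`, minus
the weight of the fully crossing matching of `g`. -/
noncomputable def starCost (q : ℕ) (D : Fin n → Fin n → ℝ) (x : Fin n)
    (g : Fin (2 * q) → Fin n) : ℝ :=
  ∑ i, D x (g i) - crossMatch q D g

lemma starCost_comp_deletePair (hsymm : ∀ i j, D i j = D j i) (f : Fin (2 * (q + 1)) → Fin n)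
    {x : Fin n} {s : Fin (q + 1) ⊕ Fin (q + 1)} (hs : f (halves (q + 1) s) = x) :
    starCost q D x (f ∘ deletePair s) = ∑ i, D x (f i) - D x x - crossMatch (q + 1) D f := by
  have hsum := sum_eq_add_add_sum_deletePair (fun i => D x (f i)) s
  have hcross := crossMatch_eq_add_crossMatch_deletePair hsymm f s
  rw [hs] at hsum hcross
  simp only [starCost, Function.comp_apply]
  linarith

lemma starCost_sort_le (hsymm : ∀ i j, D i j = D j i) (hK : qKalmanson q D)
    {w : Fin (2 * (q + 1)) → Fin n} (hw : Function.Injective w) {x : Fin n}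
    {s t : Fin (q + 1) ⊕ Fin (q + 1)} (hs : w (halves (q + 1) s) = x)
    (ht : (w ∘ Tuple.sort w) (halves (q + 1) t) = x) :
    starCost q D x ((w ∘ Tuple.sort w) ∘ deletePair t) ≤ starCost q D x (w ∘ deletePair s) := by
  rw [starCost_comp_deletePair hsymm _ hs, starCost_comp_deletePair hsymm _ ht]
  have hsum : ∑ i, D x ((w ∘ Tuple.sort w) i) = ∑ i, D x (w i) :=
    Equiv.sum_comp (Tuple.sort w) fun i => D x (w i)
  linarith [crossMatch_le_crossMatch_comp_sort hsymm hK hw]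

end StarCost

section CyclicNeighbours

variable {q n : ℕ}

/-- The `q` cities directly succeeding `x` and the `q` cities directly preceding `x` in the circular
order; `t` steps backwards are encoded as `n - t` steps forwards. -/
def cyclicNeighbours (q : ℕ) (x : Fin n) : Set (Fin n) :=
  {y | ∃ t : ℕ, 1 ≤ t ∧ t ≤ q ∧ (y = finShift x t ∨ y = finShift x (n - t))}

lemma val_finShift (x : Fin n) {t : ℕ} (ht : t < n) :
    (finShift x t).val = x + t ∨ (finShift x t).val + n = x + t := by
  have hx := x.isLt
  simp only [finShift]
  rcases lt_or_ge (x.val + t) n with h | h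
  · exact .inl (Nat.mod_eq_of_lt h)
  · rw [Nat.mod_eq_sub_mod h, Nat.mod_eq_of_lt (by omega)]
    omega

lemma exists_steps_of_mem_cyclicNeighbours (hq : q < n) {x y : Fin n}
    (hy : y ∈ cyclicNeighbours q x) :
    ∃ t, 1 ≤ t ∧ t ≤ q ∧
      (y.val = x + t ∨ y.val + n = x + t ∨ x.val = y + t ∨ x.val + n = y + t) := by
  obtain ⟨t, ht, htq, rfl | rfl⟩ := hy
  · have := val_finShift x (htq.trans_lt hq)
    exact ⟨t, ht, htq, by omega⟩
  · have := val_finShift x (t := n - t) (by omega)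
    exact ⟨t, ht, htq, by omega⟩

lemma self_notMem_cyclicNeighbours (hq : q < n) (x : Fin n) : x ∉ cyclicNeighbours q x := by
  intro hx
  obtain ⟨t, ht, htq, hsteps⟩ := exists_steps_of_mem_cyclicNeighbours hq hx
  omega

lemma halves_gap_of_strictMono {f : Fin (2 * (q + 1)) → Fin n} (hf : StrictMono f)
    (j : Fin (q + 1)) :
    (f (halves (q + 1) (.inl j))).val + q < f (halves (q + 1) (.inr j)) ∧
      (f (halves (q + 1) (.inr j))).val + q < f (halves (q + 1) (.inl j)) + n := by
  have hbetween := val_sub_val_le_of_strictMono hf (halves (q + 1) (.inl j))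
    (halves (q + 1) (.inr j))
  have hbefore := val_sub_val_le_of_strictMono hf ⟨0, by omega⟩ (halves (q + 1) (.inl j))
  have hafter := val_sub_val_le_of_strictMono hf (halves (q + 1) (.inr j)) ⟨2 * q + 1, by omega⟩
  simp only [val_halves_inl, val_halves_inr] at hbetween hbefore hafter
  omega

lemma antipode_notMem_cyclicNeighbours {f : Fin (2 * (q + 1)) → Fin n} (hf : StrictMono f)
    (s : Fin (q + 1) ⊕ Fin (q + 1)) :
    f (halves (q + 1) s.swap) ∉ cyclicNeighbours q (f (halves (q + 1) s)) := by
  intro hmem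
  have hgap := halves_gap_of_strictMono hf (s.elim id id)
  obtain ⟨t, ht, htq, hsteps⟩ := exists_steps_of_mem_cyclicNeighbours (by omega) hmem
  rcases s with j | j <;>
    simp only [Sum.elim_inl, Sum.elim_inr, id_eq, Sum.swap_inl, Sum.swap_inr] at hgap hsteps <;>
    omega

end CyclicNeighbours

section Exchange

variable {q n : ℕ} {D : Fin n → Fin n → ℝ}

lemma exists_starCost_le_of_insert (hsymm : ∀ i j, D i j = D j i) (hK : qKalmanson q D)
    {x z : Fin n} {g : Fin (2 * q) → Fin n} (hg : Function.Injective g) (hx : x ∉ Set.range g)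
    (hz : z ∉ Set.range g) (hxz : x ≠ z) :
    ∃ g' : Fin (2 * q) → Fin n, StrictMono g' ∧ x ∉ Set.range g' ∧
      insert z (Set.range g) ∩ cyclicNeighbours q x ⊆ Set.range g' ∧
      starCost q D x g' ≤ starCost q D x g := by
  obtain ⟨w, hw, hwx, hwz, rfl⟩ := exists_comp_deletePair_eq hg hx hz hxz
  set f := w ∘ Tuple.sort w
  have hf : StrictMono f := (Tuple.monotone_sort w).strictMono_of_injective
    (hw.comp (Tuple.sort w).injective)
  have hrange_f : Set.range f = Set.range w := (Tuple.sort w).surjective.range_comp w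
  obtain ⟨s, hs⟩ : ∃ s, f (halves (q + 1) s) = x :=
    ⟨(halves (q + 1)).symm ((Tuple.sort w).symm (halves (q + 1) (.inl 0))), by simp [f, hwx]⟩
  have hrange := range_comp_deletePair hf.injective s
  rw [hs] at hrange
  refine ⟨f ∘ deletePair s, hf.comp (strictMono_deletePair s), by simp [hrange], ?_,
    starCost_sort_le hsymm hK hw hwx hs⟩
  rintro y ⟨hy, hyx⟩
  have hyw : y ∈ Set.range w := by
    rcases hy with rfl | hy
    · exact ⟨_, hwz⟩
    · exact Set.range_comp_subset_range _ _ hy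
  have hy_ne_x : y ≠ x := by
    rintro rfl
    exact hy.elim hxz hx
  have hy_ne_antipode : y ≠ f (halves (q + 1) s.swap) := by
    rintro rfl
    exact antipode_notMem_cyclicNeighbours hf s (hs ▸ hyx)
  rw [hrange, hrange_f]
  exact ⟨hyw, by simp [hy_ne_x, hy_ne_antipode]⟩

lemma exists_starCost_le_of_not_cyclicNeighbours_subset (hq : q < n)
    (hsymm : ∀ i j, D i j = D j i) (hK : qKalmanson q D) {x : Fin n} {g : Fin (2 * q) → Fin n}
    (hg : Function.Injective g) (hx : x ∉ Set.range g)
    (hsub : ¬ cyclicNeighbours q x ⊆ Set.range g) :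
    ∃ g' : Fin (2 * q) → Fin n, StrictMono g' ∧ x ∉ Set.range g' ∧
      cyclicNeighbours q x \ Set.range g' ⊂ cyclicNeighbours q x \ Set.range g ∧
      starCost q D x g' ≤ starCost q D x g := by
  obtain ⟨z, hzx, hzg⟩ := Set.not_subset.1 hsub
  have hxz : x ≠ z := fun h => self_notMem_cyclicNeighbours hq x (h ▸ hzx)
  obtain ⟨g', hg', hx', hkeep, hcost⟩ := exists_starCost_le_of_insert hsymm hK hg hx hzg hxz
  refine ⟨g', hg', hx', Set.ssubset_iff_exists.2 ⟨?_, z, ⟨hzx, hzg⟩, ?_⟩, hcost⟩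
  · exact fun y ⟨hyx, hyg'⟩ => ⟨hyx, fun hyg => hyg' (hkeep ⟨.inr hyg, hyx⟩)⟩
  · exact fun h => h.2 (hkeep ⟨.inl rfl, hzx⟩)

end Exchange

/-- Lemma 3.3: for a symmetric `q`-Kalmanson matrix and a fixed city `x`, the function
`f_x(y_1,…,y_{2q}) = ∑ d(x,y_i) − CrossMatch({y_1,…,y_{2q}})` over `2q` pairwise distinct
cities different from `x` (listed in increasing order by a strictly monotone `g`) is
minimized by the set consisting of the `q` cities directly preceding `x` and the `q`
cities directly succeeding `x` in the circular arrangement, i.e. `x±1, …, x±q` mod `n`. -/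
theorem fx_minimized_by_cyclic_neighbours
    (q n : ℕ) (hq : 1 ≤ q) (hn : 2*q+1 ≤ n)
    (D : Fin n → Fin n → ℝ) (hsymm : ∀ i j, D i j = D j i)
    (hK : qKalmanson q D) (x : Fin n)
    (g₀ : Fin (2*q) → Fin n) (hg₀ : StrictMono g₀)
    (hrange : ∀ y : Fin n, (∃ i, g₀ i = y) ↔
      ∃ t : ℕ, 1 ≤ t ∧ t ≤ q ∧ (y = finShift x t ∨ y = finShift x (n - t)))
    (g : Fin (2*q) → Fin n) (hg : StrictMono g) (hgx : ∀ i, g i ≠ x) :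
    (∑ i : Fin (2*q), D x (g₀ i)) - crossMatch q D g₀ ≤
      (∑ i : Fin (2*q), D x (g i)) - crossMatch q D g := by
  have hneighbours : Set.range g₀ = cyclicNeighbours q x := Set.ext hrange
  have hx : x ∉ Set.range g := fun ⟨i, hi⟩ => hgx i hi
  clear hgx
  change starCost q D x g₀ ≤ starCost q D x g
  induction hmissing : cyclicNeighbours q x \ Set.range g using WellFoundedLT.induction
    generalizing g with
  | _ missing ih =>
    by_cases hsub : cyclicNeighbours q x ⊆ Set.range g
    · rw [strictMono_eq_of_range_subset hg₀ hg (hneighbours ▸ hsub)]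
    · obtain ⟨g', hg', hx', hfewer, hcost⟩ :=
        exists_starCost_le_of_not_cyclicNeighbours_subset (by omega) hsymm hK hg.injective hx hsub
      exact (ih _ (hmissing ▸ hfewer) g' hg' hx' rfl).trans hcost
end

section
/- Let q ≥ 2 and let G = (V,A) be a directed graph with |V| = n ≥ 1. If G contains a Hamiltonian circuit, then the undirected graph G_1 constructed from G contains a spanning subgraph C_N^q, where N = n(2q+2): there is a cyclic enumeration of all vertices of G_1 such that any two vertices at circular distance at most q along the enumeration are adjacent in G_1. -/
/-- The undirected graph `G₁` constructed from the directed graph `G = (Fin n, A)`: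
its vertices are the pairs `(v, i)` with `v ∈ Fin n` and `i ∈ Fin (2q+2)` (the vertex
`(v, i)` represents `v_{i+1}`); `(v,i)` and `(v,j)` are adjacent whenever `i ≠ j` and
`|i−j| ≤ q`, and `(u,i)` and `(v,j)` are adjacent whenever `(u,v) ∈ A` and `i−j ≥ q+2`
(the relation below is the symmetrization of this construction). -/
def adj1 (q n : ℕ) (A : Fin n → Fin n → Prop)
    (x y : Fin n × Fin (2*q+2)) : Prop :=
  (x.1 = y.1 ∧ x.2 ≠ y.2 ∧ max x.2.val y.2.val - min x.2.val y.2.val ≤ q) ∨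
  (A x.1 y.1 ∧ y.2.val + (q+2) ≤ x.2.val) ∨
  (A y.1 x.1 ∧ x.2.val + (q+2) ≤ y.2.val)

/-- `(v,i)` lies in the clique part `W₁ ∪ W₂ ∪ … ∪ W_q` of the split graph `G₂`,
i.e. the original index `i+1 ∈ {1,…,2q+2}` is not divisible by `q+1`
(the vertices `(v,i)` with `(q+1) ∣ i+1` form the independent part `W₀`). -/
def inClique (q n : ℕ) (x : Fin n × Fin (2*q+2)) : Prop :=
  (x.2.val + 1) % (q+1) ≠ 0

/-- The split graph `G₂`: the super-graph of `G₁` obtained by additionally joining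
every pair of distinct vertices of `W₁ ∪ W₂ ∪ … ∪ W_q`. -/
def adj2 (q n : ℕ) (A : Fin n → Fin n → Prop)
    (x y : Fin n × Fin (2*q+2)) : Prop :=
  adj1 q n A x y ∨ (x ≠ y ∧ inClique q n x ∧ inClique q n y)

/-!
Replace each vertex `v` of the circuit by its block `(v, 0), …, (v, 2q+1)`. A step of length
`1 ≤ p ≤ q` from `(v, i)` either stays in the block of `v`, where the indices differ by `p`, or
leads to the block of the successor of `v`, where the index is `i + p - (2q+2)`: it has dropped by
`2q+2-p ≥ q+2`, a gap at which the arc of the circuit yields an edge.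
-/

section FinShift

theorem finShift_zero {n : ℕ} (i : Fin n) : finShift i 0 = i :=
  Fin.ext (Nat.mod_eq_of_lt i.isLt)

theorem val_finShift_of_lt {n : ℕ} {i : Fin n} {p : ℕ} (h : i.val + p < n) :
    (finShift i p).val = i.val + p :=
  Nat.mod_eq_of_lt h

theorem val_finShift_of_le {n : ℕ} {i : Fin n} {p : ℕ} (hp : p ≤ n) (h : n ≤ i.val + p) :
    (finShift i p).val = i.val + p - n :=
  (Nat.mod_eq_sub_mod h).trans (Nat.mod_eq_of_lt (by omega))

variable {m k : ℕ} (s : Fin (m * k)) (p : ℕ)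

theorem modNat_finShift : (finShift s p).modNat = finShift s.modNat p := by
  ext
  calc (s.val + p) % (m * k) % k = (s.val + p) % k := Nat.mod_mul_left_mod _ _ _
    _ = (s.val % k + p) % k := (Nat.mod_add_mod _ _ _).symm

theorem divNat_finShift :
    (finShift s p).divNat = finShift s.divNat ((s.modNat.val + p) / k) := by
  have hk : 0 < k := s.modNat.pos
  ext
  calc (s.val + p) % (m * k) / k = (s.val + p) / k % m := Nat.mod_mul_left_div_self _ _ _
    _ = (k * (s.val / k) + (s.val % k + p)) / k % m := by
      rw [← Nat.add_assoc, Nat.div_add_mod]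
    _ = (s.val / k + (s.val % k + p) / k) % m := by rw [Nat.mul_add_div hk]

end FinShift

section Adjacency

variable {q n : ℕ} {A : Fin n → Fin n → Prop} {i : Fin (2 * q + 2)} {p : ℕ}

theorem adj1_finShift_of_lt (v : Fin n) (hp : 1 ≤ p) (hpq : p ≤ q)
    (h : i.val + p < 2 * q + 2) : adj1 q n A (v, i) (v, finShift i p) := by
  have hval : (finShift i p).val = i.val + p := val_finShift_of_lt h
  refine Or.inl ⟨rfl, Fin.ne_of_val_ne ?_, ?_⟩ <;> dsimp only <;> omega

theorem adj1_finShift_of_le {u v : Fin n} (huv : A u v) (hpq : p ≤ q)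
    (h : 2 * q + 2 ≤ i.val + p) : adj1 q n A (u, i) (v, finShift i p) := by
  have hval : (finShift i p).val = i.val + p - (2 * q + 2) := val_finShift_of_le (by omega) h
  exact Or.inr (Or.inl ⟨huv, by dsimp only; omega⟩)

end Adjacency

theorem spanning_cycle_power_of_hamiltonian_general (q n : ℕ) (A : Fin n → Fin n → Prop)
    (hham : ∃ h : Equiv.Perm (Fin n), ∀ t : Fin n, A (h t) (h (finShift t 1))) :
    ∃ w : Fin (n * (2 * q + 2)) ≃ (Fin n × Fin (2 * q + 2)),
      ∀ s : Fin (n * (2 * q + 2)), ∀ p : ℕ, 1 ≤ p → p ≤ q →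
        adj1 q n A (w s) (w (finShift s p)) := by
  obtain ⟨h, harc⟩ := hham
  refine ⟨finProdFinEquiv.symm.trans (h.prodCongr (Equiv.refl _)), fun s p hp hpq => ?_⟩
  change adj1 q n A (h s.divNat, s.modNat) (h (finShift s p).divNat, (finShift s p).modNat)
  rw [divNat_finShift, modNat_finShift]
  rcases Nat.lt_or_ge (s.modNat.val + p) (2 * q + 2) with hstay | hwrap
  · rw [Nat.div_eq_of_lt hstay, finShift_zero]
    exact adj1_finShift_of_lt _ hp hpq hstay
  · have hcarry : (s.modNat.val + p) / (2 * q + 2) = 1 :=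
      Nat.div_eq_of_lt_le (by omega) (by omega)
    rw [hcarry]
    exact adj1_finShift_of_le (harc _) hpq hwrap

/-- Lemma 5.1: if the directed graph `G = (Fin n, A)` contains a Hamiltonian circuit,
then `G₁` contains a spanning subgraph `C_N^q` with `N = n(2q+2)`: there is a cyclic
enumeration of all vertices of `G₁` in which any two vertices at circular distance at
most `q` are adjacent in `G₁`. -/
theorem spanning_cycle_power_of_hamiltonian (q n : ℕ) (hq : 2 ≤ q) (hn : 1 ≤ n)
    (A : Fin n → Fin n → Prop)
    (hham : ∃ h : Equiv.Perm (Fin n), ∀ t : Fin n, A (h t) (h (finShift t 1))) :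
    ∃ w : Fin (n*(2*q+2)) ≃ (Fin n × Fin (2*q+2)),
      ∀ s : Fin (n*(2*q+2)), ∀ p : ℕ, 1 ≤ p → p ≤ q →
        adj1 q n A (w s) (w (finShift s p)) :=
  spanning_cycle_power_of_hamiltonian_general q n A hham
end

section
/- Let q ≥ 2 and let G = (V,A) be a directed graph with |V| = n ≥ 1. If the undirected graph G_2 constructed from G contains a spanning subgraph C_N^q with N = n(2q+2), then the directed graph G contains a Hamiltonian circuit. -/
/-! A vertex of `W₀` is a middle vertex `v_{q+1}` or a last vertex `v_{2q+2}`. Since `W₀` is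
independent and has `N / (q+1)` elements, it occupies every `(q+1)`-st position of the enumeration;
two middle vertices at distance `q+1` would have a common neighbour between them and hence coincide,
so middle and last vertices alternate. The `q` positions on either side of the middle vertex of `v`
then hold all vertices `v_i` outside `W₀`, those with `i > q+1` (*upper*) and those with `i < q+1`
(*lower*) alike. An upper `v_i` is adjacent to the last vertex of `u` only if `u = v`, a lower one
only if `(u, v)` is an arc. Hence the last vertex of `v` sits next to its own block, always on the
same side, and the block on its other side belongs to an out-neighbour of `v`. -/

section CyclicEnumeration

variable {X : Type*} {N : ℕ} {f : ℤ → X}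

/-- A cyclic enumeration of `X` of length `N`, unrolled to an `N`-periodic sequence indexed by `ℤ`
so that positions can be added and subtracted without reduction modulo `N`. -/
structure IsCyclicEnumeration (N : ℕ) (f : ℤ → X) : Prop where
  surjective : Function.Surjective f
  eq_iff_modEq (j k : ℤ) : f j = f k ↔ j ≡ k [ZMOD N]

theorem exists_isCyclicEnumeration [NeZero N] (w : Fin N ≃ X) :
    ∃ f : ℤ → X, IsCyclicEnumeration N f ∧
      ∀ k : ℤ, ∃ s, f k = w s ∧ ∀ p : ℕ, f (k + p) = w (finShift s p) := by
  let index (k : ℤ) : Fin N := ⟨(k : ZMod N).val, ZMod.val_lt _⟩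
  have index_natCast (s : Fin N) : index s.val = s :=
    Fin.ext (by simp only [index, Int.cast_natCast, ZMod.val_cast_of_lt s.isLt])
  have index_add (k : ℤ) (p : ℕ) : index (k + p) = finShift (index k) p :=
    Fin.ext (by simp only [index, finShift, Int.cast_add, Int.cast_natCast, ZMod.val_add,
      ZMod.val_natCast, Nat.add_mod_mod])
  refine ⟨w ∘ index, ⟨w.surjective.comp fun s => ⟨s.val, index_natCast s⟩, fun j k => ?_⟩,
    fun k => ⟨index k, rfl, fun p => congrArg w (index_add k p)⟩⟩
  rw [Function.comp_apply, Function.comp_apply, w.injective.eq_iff, Fin.mk.injEq,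
    (ZMod.val_injective N).eq_iff, ZMod.intCast_eq_intCast_iff]

namespace IsCyclicEnumeration

theorem comp_add_left (hf : IsCyclicEnumeration N f) (c : ℤ) :
    IsCyclicEnumeration N fun k => f (c + k) where
  surjective := hf.surjective.comp (Equiv.addLeft c).surjective
  eq_iff_modEq _ _ := (hf.eq_iff_modEq _ _).trans
    ⟨Int.ModEq.add_left_cancel' c, Int.ModEq.add_left c⟩

theorem comp_neg (hf : IsCyclicEnumeration N f) : IsCyclicEnumeration N fun k => f (-k) where
  surjective := hf.surjective.comp neg_surjective
  eq_iff_modEq _ _ := (hf.eq_iff_modEq _ _).trans Int.neg_modEq_neg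

theorem exists_equiv [NeZero N] (hf : IsCyclicEnumeration N f) :
    ∃ h : Fin N ≃ X, ∀ t : Fin N, ∀ p : ℕ, h t = f t.val ∧ h (finShift t p) = f (t.val + p) := by
  have hbij : Function.Bijective fun t : Fin N => f t.val := by
    refine ⟨fun s t hst => ?_, fun x => ?_⟩
    · have hmod := Int.natCast_modEq_iff.1 ((hf.eq_iff_modEq _ _).1 hst)
      exact Fin.ext (hmod.eq_of_lt_of_lt s.isLt t.isLt)
    · obtain ⟨k, rfl⟩ := hf.surjective x
      obtain ⟨r, hr, hrk⟩ := Int.existsUnique_equiv_nat k (Nat.cast_pos.2 (NeZero.pos N))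
      exact ⟨⟨r, by exact_mod_cast hr⟩, (hf.eq_iff_modEq _ _).2 hrk⟩
  refine ⟨Equiv.ofBijective _ hbij, fun t p => ⟨rfl, (hf.eq_iff_modEq _ _).2 ?_⟩⟩
  simpa only [finShift, Int.natCast_mod, Nat.cast_add] using Int.mod_modEq _ _

theorem apply_add_eq (hf : IsCyclicEnumeration N f) {j k : ℤ} (h : f j = f k) (c : ℤ) :
    f (j + c) = f (k + c) :=
  (hf.eq_iff_modEq _ _).2 (((hf.eq_iff_modEq _ _).1 h).add_right c)

theorem windows_injective (hf : IsCyclicEnumeration N f) {T : Set X} {m : ℕ}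
    (hsep : ∀ j k, f j ∈ T → f k ∈ T → j < k → j + m ≤ k) {pos : T → ℤ}
    (hpos : ∀ x, f (pos x) = x) :
    Function.Injective fun z : T × Fin m => f (pos z.1 + z.2.val) := by
  have offset_le (x y : T) (p p' : Fin m) (h : f (pos x + p.val) = f (pos y + p'.val)) :
      p' ≤ p := by
    by_contra! hlt
    have hx := hf.apply_add_eq h.symm (-p.val)
    rw [add_neg_cancel_right, hpos, add_assoc] at hx
    have := hsep (pos y) _ (by rw [hpos]; exact y.2) (by rw [hx]; exact x.2) (by omega)
    omega
  rintro ⟨x, p⟩ ⟨y, p'⟩ h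
  obtain rfl : p = p' := (offset_le y x p' p h.symm).antisymm (offset_le x y p p' h)
  have hxy := hf.apply_add_eq h (-p.val)
  simp only [add_neg_cancel_right, hpos] at hxy
  rw [Subtype.ext hxy]

variable [Fintype X] {T : Finset X} {m : ℕ}

theorem exists_mem_window (hf : IsCyclicEnumeration N f) (hcard : T.card * m = Fintype.card X)
    (hsep : ∀ j k, f j ∈ T → f k ∈ T → j < k → j + m ≤ k) (k : ℤ) :
    ∃ p : ℕ, p < m ∧ f (k - p) ∈ T := by
  have hpos (x : T) : f (Function.surjInv hf.surjective x) = x := Function.surjInv_eq _ _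
  -- The windows of length `m` starting at the elements of `T` are disjoint, so they cover `X`.
  have windows_bijective := (Fintype.bijective_iff_injective_and_card _).2
    ⟨hf.windows_injective (T := T) hsep hpos, by simp [hcard]⟩
  obtain ⟨⟨x, p⟩, hk⟩ := windows_bijective.surjective (f k)
  have hx := hf.apply_add_eq hk (-p.val)
  rw [add_neg_cancel_right, hpos, ← sub_eq_add_neg] at hx
  exact ⟨p, p.isLt, hx ▸ x.2⟩

theorem mem_add_mul (hf : IsCyclicEnumeration N f) (hcard : T.card * m = Fintype.card X)
    (hsep : ∀ j k, f j ∈ T → f k ∈ T → j < k → j + m ≤ k) {k : ℤ} (hk : f k ∈ T) (i : ℤ) :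
    f (k + i * m) ∈ T := by
  induction i with
  | zero => simpa using hk
  | succ i ih =>
    obtain ⟨p, hp, hmem⟩ := hf.exists_mem_window hcard hsep (k + (i + 1) * m)
    have hle := hsep _ _ ih hmem (by linarith)
    obtain rfl : p = 0 := Nat.le_zero.1 (by zify; linarith)
    simpa using hmem
  | pred i ih =>
    obtain ⟨p, hp, hmem⟩ := hf.exists_mem_window hcard hsep (k + -i * m - 1)
    have := hsep _ _ hmem ih (by omega)
    obtain rfl : m = p + 1 := by omega
    convert hmem using 2
    push_cast
    ring

theorem mem_iff_modEq (hf : IsCyclicEnumeration N f) (hcard : T.card * m = Fintype.card X)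
    (hsep : ∀ j k, f j ∈ T → f k ∈ T → j < k → j + m ≤ k) {j : ℤ} (hj : f j ∈ T) (k : ℤ) :
    f k ∈ T ↔ j ≡ k [ZMOD m] := by
  refine ⟨fun hk => ?_, fun h => ?_⟩
  · have hm : (0 : ℤ) < m := by
      obtain ⟨p, hp, -⟩ := hf.exists_mem_window hcard hsep k
      omega
    have hmem := hf.mem_add_mul hcard hsep hj ((k - j) / m)
    have hdiv := Int.emod_add_mul_ediv (k - j) m
    have hnonneg := Int.emod_nonneg (k - j) hm.ne'
    have hlt := Int.emod_lt_of_pos (k - j) hm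
    have hle := hsep _ _ hmem hk
    refine Int.modEq_iff_dvd.2 (Int.dvd_of_emod_eq_zero ?_)
    by_contra hne
    rw [mul_comm] at hdiv
    omega
  · obtain ⟨i, hi⟩ := Int.modEq_iff_dvd.1 h
    have := hf.mem_add_mul hcard hsep hj i
    rwa [mul_comm, ← hi, add_sub_cancel] at this

end IsCyclicEnumeration

end CyclicEnumeration

section Adjacency

variable {q n : ℕ} {A : Fin n → Fin n → Prop} {x y : Fin n × Fin (2 * q + 2)}

theorem adj2.symm (h : adj2 q n A x y) : adj2 q n A y x := by
  rcases h with (⟨hfst, hne, hdist⟩ | harc | harc) | ⟨hne, hx, hy⟩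
  · exact .inl (.inl ⟨hfst.symm, hne.symm, by rwa [max_comm, min_comm]⟩)
  · exact .inl (.inr (.inr harc))
  · exact .inl (.inr (.inl harc))
  · exact .inr ⟨hne.symm, hy, hx⟩

theorem inClique_iff : inClique q n x ↔ x.2.val ≠ q ∧ x.2.val ≠ 2 * q + 1 := by
  have hx := x.2.isLt
  rw [inClique, ne_eq, ← Nat.dvd_iff_mod_eq_zero, ← not_or, not_iff_not]
  constructor
  · rintro ⟨c, hc⟩
    have hc3 : c < 3 := by nlinarith
    interval_cases c <;> omega
  · rintro (h | h)
    · exact ⟨1, by omega⟩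
    · exact ⟨2, by omega⟩

theorem adj2.of_middle (h : adj2 q n A x y) (hx : x.2.val = q) :
    y.1 = x.1 ∧ inClique q n y := by
  rw [inClique_iff]
  have hy := y.2.isLt
  rcases h with (⟨hfst, hne, hdist⟩ | ⟨-, hlevel⟩ | ⟨-, hlevel⟩) | ⟨-, hclique, -⟩
  · have := Fin.val_ne_of_ne hne
    exact ⟨hfst.symm, by omega, by omega⟩
  · omega
  · omega
  · exact absurd hx (inClique_iff.1 hclique).1

theorem adj2.of_last (h : adj2 q n A x y) (hx : x.2.val = 2 * q + 1) :
    inClique q n y ∧ (x.1 = y.1 ∧ q < y.2.val ∨ A x.1 y.1 ∧ y.2.val < q) := by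
  rw [inClique_iff]
  have hy := y.2.isLt
  rcases h with (⟨hfst, hne, hdist⟩ | ⟨harc, hlevel⟩ | ⟨-, hlevel⟩) | ⟨-, hclique, -⟩
  · have := Fin.val_ne_of_ne hne
    exact ⟨⟨by omega, by omega⟩, .inl ⟨hfst, by omega⟩⟩
  · exact ⟨⟨by omega, by omega⟩, .inr ⟨harc, by omega⟩⟩
  · omega
  · exact absurd hx (inClique_iff.1 hclique).2

theorem adj2.inClique_of_not_inClique (h : adj2 q n A x y) (hx : ¬inClique q n x) :
    inClique q n y := by
  rw [inClique_iff, not_and_or, not_not, not_not] at hx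
  rcases hx with hx | hx
  · exact (h.of_middle hx).2
  · exact (h.of_last hx).1

end Adjacency

theorem exists_eq_mul_add_abs_le {q : ℕ} {k : ℤ} (hk : ¬(q + 1 : ℤ) ∣ k) :
    ∃ j d : ℤ, k = j * (2 * q + 2) + d ∧ |d| ≤ q := by
  have hdiv := Int.bdiv_add_bmod' k (2 * q + 2)
  have hle := Int.le_bmod (x := k) (m := 2 * q + 2) (by omega)
  have hlt := Int.bmod_lt (x := k) (m := 2 * q + 2) (by omega)
  have hne : k.bmod (2 * q + 2) ≠ -(q + 1) := fun hmod =>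
    hk ⟨2 * k.bdiv (2 * q + 2) - 1, by push_cast at hdiv; linarith⟩
  push_cast at hdiv hle hlt
  exact ⟨_, _, hdiv.symm, abs_le.2 ⟨by omega, by omega⟩⟩

/-- A spanning subgraph `C_N^q` of `G₂`, as a cyclic enumeration unrolled along `ℤ` and rotated so
that a middle vertex `v_{q+1}` is at position `0`. -/
structure IsAnchoredCyclePower (q n : ℕ) (A : Fin n → Fin n → Prop)
    (f : ℤ → Fin n × Fin (2 * q + 2)) : Prop
    extends IsCyclicEnumeration (n * (2 * q + 2)) f where
  adj2_of_lt {j k : ℤ} : j < k → k ≤ j + q → adj2 q n A (f j) (f k)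
  middle_zero : (f 0).2.val = q

/-- The vertex `v` of `G` that owns block `i`, the positions at distance at most `q` from `i(2q+2)`:
`v` is the vertex whose middle vertex `v_{q+1}` is at the centre `i(2q+2)`. -/
def blockVertex {n : ℕ} (q : ℕ) (f : ℤ → Fin n × Fin (2 * q + 2)) (i : ℤ) : Fin n :=
  (f (i * (2 * q + 2))).1

/-- The vertex `v` of `G` whose last vertex `v_{2q+2}` is at the position `i(2q+2) + q + 1` between
block `i` and block `i + 1`. -/
def separatorVertex {n : ℕ} (q : ℕ) (f : ℤ → Fin n × Fin (2 * q + 2)) (i : ℤ) : Fin n :=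
  (f (i * (2 * q + 2) + (q + 1))).1

theorem separatorVertex_comp_neg {q n : ℕ} (f : ℤ → Fin n × Fin (2 * q + 2)) (i : ℤ) :
    separatorVertex q (fun k => f (-k)) i = separatorVertex q f (-i - 1) := by
  simp only [separatorVertex]
  ring_nf

namespace IsAnchoredCyclePower

variable {q n : ℕ} {A : Fin n → Fin n → Prop} {f : ℤ → Fin n × Fin (2 * q + 2)}

theorem adj2_of_ne (h : IsAnchoredCyclePower q n A f) {j k : ℤ} (hne : j ≠ k) (hjk : k ≤ j + q)
    (hkj : j ≤ k + q) : adj2 q n A (f j) (f k) := by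
  rcases hne.lt_or_gt with hlt | hgt
  · exact h.adj2_of_lt hlt hjk
  · exact (h.adj2_of_lt hgt hkj).symm

theorem reflect (h : IsAnchoredCyclePower q n A f) :
    IsAnchoredCyclePower q n A fun k => f (-k) where
  toIsCyclicEnumeration := h.toIsCyclicEnumeration.comp_neg
  adj2_of_lt hlt hle := h.adj2_of_ne (by omega) (by omega) (by omega)
  middle_zero := by simpa using h.middle_zero

theorem not_inClique_iff_dvd (h : IsAnchoredCyclePower q n A f) (k : ℤ) :
    ¬inClique q n (f k) ↔ (q + 1 : ℤ) ∣ k := by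
  classical
  let W₀ : Finset (Fin n × Fin (2 * q + 2)) :=
    Finset.univ ×ˢ {⟨q, by omega⟩, ⟨2 * q + 1, by omega⟩}
  have mem_W₀ (x) : x ∈ W₀ ↔ ¬inClique q n x := by
    simp only [W₀, Finset.mem_product, Finset.mem_univ, true_and, Finset.mem_insert,
      Finset.mem_singleton, Fin.ext_iff, inClique_iff, not_and_or, not_not]
  have card_W₀ : W₀.card * (q + 1) = Fintype.card (Fin n × Fin (2 * q + 2)) := by
    rw [Finset.card_product, Finset.card_pair (by simp; omega)]
    simp only [Finset.card_univ, Fintype.card_prod, Fintype.card_fin]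
    ring
  have separated (j k : ℤ) (hj : f j ∈ W₀) (hk : f k ∈ W₀) (hlt : j < k) :
      j + (q + 1 : ℕ) ≤ k := by
    rw [mem_W₀] at hj hk
    by_contra! hclose
    exact hk ((h.adj2_of_lt hlt (by omega)).inClique_of_not_inClique hj)
  have zero_mem : f 0 ∈ W₀ := (mem_W₀ _).2 fun hc => (inClique_iff.1 hc).1 h.middle_zero
  rw [← mem_W₀, h.mem_iff_modEq card_W₀ separated zero_mem, Int.modEq_iff_dvd, sub_zero]
  norm_cast

theorem middle_separated (h : IsAnchoredCyclePower q n A f) (hq : 0 < q) {j k : ℤ}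
    (hj : (f j).2.val = q) (hk : (f k).2.val = q) (hlt : j < k) : j + (2 * q + 2) ≤ k := by
  by_contra! hclose
  have hdvd {i : ℤ} (hi : (f i).2.val = q) : (q + 1 : ℤ) ∣ i :=
    (h.not_inClique_iff_dvd i).1 fun hc => (inClique_iff.1 hc).1 hi
  obtain ⟨c, hc⟩ := dvd_sub (hdvd hk) (hdvd hj)
  obtain rfl : c = 1 := by
    have : 0 < c := by nlinarith
    have : c < 2 := by nlinarith
    omega
  -- `f (j + 1)` is a common neighbour of the two middle vertices.
  have hfst : (f j).1 = (f k).1 :=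
    ((h.adj2_of_ne (k := j + 1) (by omega) (by omega) (by omega)).of_middle hj).1.symm.trans
      ((h.adj2_of_ne (by omega) (by omega) (by omega)).of_middle hk).1
  have hmod := (h.eq_iff_modEq j k).1 (Prod.ext hfst (Fin.ext (hj.trans hk.symm)))
  have hle := Int.le_of_dvd (by omega) hmod.dvd
  have hn := Nat.le_mul_of_pos_left (2 * q + 2) (f 0).1.pos
  omega

theorem middle_iff_dvd (h : IsAnchoredCyclePower q n A f) (hq : 0 < q) (k : ℤ) :
    (f k).2.val = q ↔ (2 * q + 2 : ℤ) ∣ k := by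
  let M : Finset (Fin n × Fin (2 * q + 2)) := Finset.univ ×ˢ {⟨q, by omega⟩}
  have mem_M (x) : x ∈ M ↔ x.2.val = q := by
    simp only [M, Finset.mem_product, Finset.mem_univ, true_and, Finset.mem_singleton, Fin.ext_iff]
  have card_M : M.card * (2 * q + 2) = Fintype.card (Fin n × Fin (2 * q + 2)) := by
    simp [M]
  have separated (j k : ℤ) (hj : f j ∈ M) (hk : f k ∈ M) (hlt : j < k) :
      j + (2 * q + 2 : ℕ) ≤ k :=
    h.middle_separated hq ((mem_M _).1 hj) ((mem_M _).1 hk) hlt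
  rw [← mem_M, h.mem_iff_modEq card_M separated ((mem_M _).2 h.middle_zero), Int.modEq_iff_dvd,
    sub_zero]
  norm_cast

theorem middle_center (h : IsAnchoredCyclePower q n A f) (hq : 0 < q) (i : ℤ) :
    (f (i * (2 * q + 2))).2.val = q :=
  (h.middle_iff_dvd hq _).2 (dvd_mul_left _ _)

theorem last_separator (h : IsAnchoredCyclePower q n A f) (hq : 0 < q) (i : ℤ) :
    (f (i * (2 * q + 2) + (q + 1))).2.val = 2 * q + 1 := by
  have hindep := (h.not_inClique_iff_dvd (i * (2 * q + 2) + (q + 1))).2 ⟨2 * i + 1, by ring⟩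
  have hmiddle : (f (i * (2 * q + 2) + (q + 1))).2.val ≠ q := by
    rw [ne_eq, h.middle_iff_dvd hq, Int.dvd_add_right (dvd_mul_left _ _)]
    exact fun hdvd => absurd (Int.le_of_dvd (by omega) hdvd) (by omega)
  rw [inClique_iff] at hindep
  tauto

theorem fst_eq_blockVertex (h : IsAnchoredCyclePower q n A f) (hq : 0 < q) (i : ℤ) {d : ℤ}
    (hd : |d| ≤ q) : (f (i * (2 * q + 2) + d)).1 = blockVertex q f i := by
  rw [abs_le] at hd
  obtain rfl | hd0 := eq_or_ne d 0
  · rw [add_zero, blockVertex]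
  · exact ((h.adj2_of_ne (by omega) (by omega) (by omega)).of_middle (h.middle_center hq i)).1

theorem separatorVertex_eq_or_arc (h : IsAnchoredCyclePower q n A f) (hq : 0 < q) (i : ℤ) {k : ℤ}
    (hne : i * (2 * q + 2) + (q + 1) ≠ k) (hdist : |k - (i * (2 * q + 2) + (q + 1))| ≤ q) :
    separatorVertex q f i = (f k).1 ∧ q < (f k).2.val ∨
      A (separatorVertex q f i) (f k).1 ∧ (f k).2.val < q := by
  rw [abs_le] at hdist
  exact ((h.adj2_of_ne hne (by omega) (by omega)).of_last (h.last_separator hq i)).2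

theorem blockVertex_isCyclicEnumeration (h : IsAnchoredCyclePower q n A f) (hq : 0 < q) :
    IsCyclicEnumeration n (blockVertex q f) where
  surjective v := by
    obtain ⟨k, hk⟩ := h.surjective (v, ⟨q, by omega⟩)
    obtain ⟨i, rfl⟩ := (h.middle_iff_dvd hq k).1 (by rw [hk])
    exact ⟨i, by simp only [blockVertex, mul_comm i, hk]⟩
  eq_iff_modEq i j := by
    have hcenter : blockVertex q f i = blockVertex q f j ↔
        f (i * (2 * q + 2)) = f (j * (2 * q + 2)) := by
      rw [Prod.ext_iff, Fin.ext_iff (a := Prod.snd _), h.middle_center hq, h.middle_center hq]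
      simp only [blockVertex, and_true]
    rw [hcenter, h.eq_iff_modEq, Int.modEq_iff_dvd, Int.modEq_iff_dvd, ← sub_mul]
    push_cast
    exact mul_dvd_mul_iff_right (by omega)

theorem apply_congr_block (h : IsAnchoredCyclePower q n A f) {i j : ℤ} (hij : i ≡ j [ZMOD n])
    (d : ℤ) : f (i * (2 * q + 2) + d) = f (j * (2 * q + 2) + d) := by
  refine (h.eq_iff_modEq _ _).2 (Int.ModEq.add_right d ?_)
  push_cast
  exact hij.mul_right'

theorem exists_offset (h : IsAnchoredCyclePower q n A f) (hq : 0 < q) {i : ℤ}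
    {x : Fin n × Fin (2 * q + 2)} (hfst : x.1 = blockVertex q f i) (hx : inClique q n x) :
    ∃ d : ℤ, d ≠ 0 ∧ |d| ≤ q ∧ f (i * (2 * q + 2) + d) = x := by
  obtain ⟨k, rfl⟩ := h.surjective x
  have hk : ¬(q + 1 : ℤ) ∣ k := by rwa [← h.not_inClique_iff_dvd, not_not]
  obtain ⟨j, d, rfl, hd⟩ := exists_eq_mul_add_abs_le hk
  have hij := ((h.blockVertex_isCyclicEnumeration hq).eq_iff_modEq j i).1
    ((h.fst_eq_blockVertex hq j hd).symm.trans hfst)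
  refine ⟨d, ?_, hd, (h.apply_congr_block hij d).symm⟩
  rintro rfl
  exact hk ⟨2 * j, by ring⟩

theorem exists_separator_beside (h : IsAnchoredCyclePower q n A f) (hq : 0 < q) (i : ℤ)
    {s : Fin (2 * q + 2)} (hs : inClique q n (blockVertex q f i, s)) :
    ∃ j, (j = i ∨ j = i - 1) ∧ (separatorVertex q f j = blockVertex q f i ∧ q < s.val ∨
      A (separatorVertex q f j) (blockVertex q f i) ∧ s.val < q) := by
  obtain ⟨d, hd0, hd, hfd⟩ := h.exists_offset hq (x := (_, s)) rfl hs
  rw [abs_le] at hd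
  rcases hd0.lt_or_gt with hneg | hpos
  · refine ⟨i - 1, .inr rfl, ?_⟩
    have hbeside := h.separatorVertex_eq_or_arc hq (i - 1) (k := i * (2 * q + 2) + d)
      (by linarith) (by rw [abs_le]; constructor <;> linarith)
    rwa [hfd] at hbeside
  · refine ⟨i, .inl rfl, ?_⟩
    have hbeside := h.separatorVertex_eq_or_arc hq i (k := i * (2 * q + 2) + d)
      (by linarith) (by rw [abs_le]; constructor <;> linarith)
    rwa [hfd] at hbeside

theorem separatorVertex_eq_or_pred_eq (h : IsAnchoredCyclePower q n A f) (hq : 0 < q) (i : ℤ) :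
    separatorVertex q f i = blockVertex q f i ∨
      separatorVertex q f (i - 1) = blockVertex q f i := by
  obtain ⟨j, rfl | rfl, hj⟩ := h.exists_separator_beside hq i (s := ⟨2 * q, by omega⟩)
    (inClique_iff.2 ⟨by simp; omega, by simp⟩)
  · exact .inl (hj.resolve_right fun hlow => absurd hlow.2 (by simp; omega)).1
  · exact .inr (hj.resolve_right fun hlow => absurd hlow.2 (by simp; omega)).1

theorem arc_of_subsingleton [Subsingleton (Fin n)] (h : IsAnchoredCyclePower q n A f) (hq : 0 < q)
    (u v : Fin n) : A u v := by
  obtain ⟨j, -, hj⟩ := h.exists_separator_beside hq 0 (s := 0)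
    (inClique_iff.2 ⟨by simp; omega, by simp⟩)
  convert (hj.resolve_left fun hup => absurd hup.2 (by simp)).1

section Nontrivial

variable [Nontrivial (Fin n)]

theorem blockVertex_succ_ne (h : IsAnchoredCyclePower q n A f) (hq : 0 < q) (i : ℤ) :
    blockVertex q f (i + 1) ≠ blockVertex q f i := by
  rw [ne_eq, (h.blockVertex_isCyclicEnumeration hq).eq_iff_modEq, Int.modEq_iff_dvd]
  intro hdvd
  have hn := Fin.nontrivial_iff_two_le.1 ‹Nontrivial (Fin n)›
  rw [sub_add_cancel_left, Int.dvd_neg] at hdvd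
  exact absurd (Int.le_of_dvd one_pos hdvd) (by omega)

theorem separatorVertex_eq_blockVertex (h : IsAnchoredCyclePower q n A f) (hq : 0 < q)
    (h0 : separatorVertex q f 0 = blockVertex q f 0) (i : ℤ) :
    separatorVertex q f i = blockVertex q f i := by
  have forward (m : ℕ) : separatorVertex q f m = blockVertex q f m := by
    induction m with
    | zero => exact h0
    | succ m ih =>
      refine (h.separatorVertex_eq_or_pred_eq hq _).resolve_right fun hback => ?_
      rw [Nat.cast_succ, add_sub_cancel_right, ih] at hback
      exact h.blockVertex_succ_ne hq m hback.symm
  obtain ⟨m, -, hm⟩ := Int.existsUnique_equiv_nat i (Nat.cast_pos.2 (f 0).1.pos)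
  have hsep : separatorVertex q f m = separatorVertex q f i :=
    congrArg Prod.fst (h.apply_congr_block hm (q + 1))
  rw [← hsep, forward, ((h.blockVertex_isCyclicEnumeration hq).eq_iff_modEq _ _).2 hm]

theorem arc_blockVertex_succ (h : IsAnchoredCyclePower q n A f) (hq : 0 < q)
    (h0 : separatorVertex q f 0 = blockVertex q f 0) (i : ℤ) :
    A (blockVertex q f i) (blockVertex q f (i + 1)) := by
  have hfst : (f ((i + 1) * (2 * q + 2) + -1)).1 = blockVertex q f (i + 1) :=
    h.fst_eq_blockVertex hq (i + 1) (by simp; omega)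
  have hbeside := h.separatorVertex_eq_or_arc hq i (k := (i + 1) * (2 * q + 2) + -1)
    (by linarith) (by rw [abs_le]; constructor <;> linarith)
  rw [hfst, h.separatorVertex_eq_blockVertex hq h0] at hbeside
  exact (hbeside.resolve_left fun hup => h.blockVertex_succ_ne hq i hup.1.symm).1

end Nontrivial

theorem exists_arcs (h : IsAnchoredCyclePower q n A f) (hq : 0 < q) :
    ∃ a : ℤ → Fin n, IsCyclicEnumeration n a ∧ ∀ i, A (a i) (a (i + 1)) := by
  rcases subsingleton_or_nontrivial (Fin n) with _ | _
  · exact ⟨_, h.blockVertex_isCyclicEnumeration hq, fun i => h.arc_of_subsingleton hq _ _⟩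
  rcases h.separatorVertex_eq_or_pred_eq hq 0 with hright | hleft
  · exact ⟨_, h.blockVertex_isCyclicEnumeration hq, h.arc_blockVertex_succ hq hright⟩
  · have hright : separatorVertex q (fun k => f (-k)) 0 = blockVertex q (fun k => f (-k)) 0 := by
      rw [separatorVertex_comp_neg]
      simpa [blockVertex] using hleft
    exact ⟨_, h.reflect.blockVertex_isCyclicEnumeration hq,
      h.reflect.arc_blockVertex_succ hq hright⟩

end IsAnchoredCyclePower

theorem exists_isAnchoredCyclePower {q n : ℕ} [NeZero n] {A : Fin n → Fin n → Prop}
    (w : Fin (n * (2 * q + 2)) ≃ Fin n × Fin (2 * q + 2))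
    (hw : ∀ s : Fin (n * (2 * q + 2)), ∀ p : ℕ, 1 ≤ p → p ≤ q →
      adj2 q n A (w s) (w (finShift s p))) :
    ∃ f, IsAnchoredCyclePower q n A f := by
  obtain ⟨f, hf, hfw⟩ := exists_isCyclicEnumeration w
  obtain ⟨c, hc⟩ := hf.surjective (0, ⟨q, by omega⟩)
  refine ⟨fun k => f (c + k), hf.comp_add_left c, fun {j k} hlt hle => ?_, by simp [hc]⟩
  obtain ⟨p, hp⟩ := Int.le.dest hlt.le
  obtain ⟨s, hs, hshift⟩ := hfw (c + j)
  rw [← hp, ← add_assoc, hs, hshift]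
  exact hw s p (by omega) (by omega)

theorem hamiltonian_of_spanning_cycle_power_general (q n : ℕ) (hq : 1 ≤ q)
    (A : Fin n → Fin n → Prop)
    (hspan : ∃ w : Fin (n * (2 * q + 2)) ≃ (Fin n × Fin (2 * q + 2)),
      ∀ s : Fin (n * (2 * q + 2)), ∀ p : ℕ, 1 ≤ p → p ≤ q →
        adj2 q n A (w s) (w (finShift s p))) :
    ∃ h : Equiv.Perm (Fin n), ∀ t : Fin n, A (h t) (h (finShift t 1)) := by
  rcases eq_zero_or_neZero n with rfl | _
  · exact ⟨Equiv.refl _, fun t => t.elim0⟩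
  obtain ⟨w, hw⟩ := hspan
  obtain ⟨f, hf⟩ := exists_isAnchoredCyclePower w hw
  obtain ⟨a, ha, harc⟩ := hf.exists_arcs hq
  obtain ⟨h, hh⟩ := ha.exists_equiv
  refine ⟨h, fun t => ?_⟩
  rw [(hh t 1).1, (hh t 1).2]
  exact harc t.val

/-- Lemma 5.3: if the split graph `G₂` contains a spanning subgraph `C_N^q` with
`N = n(2q+2)` (a cyclic enumeration of all its vertices in which any two vertices at
circular distance at most `q` are adjacent in `G₂`), then the directed graph
`G = (Fin n, A)` contains a Hamiltonian circuit. -/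
theorem hamiltonian_of_spanning_cycle_power (q n : ℕ) (hq : 2 ≤ q) (hn : 1 ≤ n)
    (A : Fin n → Fin n → Prop)
    (hspan : ∃ w : Fin (n*(2*q+2)) ≃ (Fin n × Fin (2*q+2)),
      ∀ s : Fin (n*(2*q+2)), ∀ p : ℕ, 1 ≤ p → p ≤ q →
        adj2 q n A (w s) (w (finShift s p))) :
    ∃ h : Equiv.Perm (Fin n), ∀ t : Fin n, A (h t) (h (finShift t 1)) :=
  hamiltonian_of_spanning_cycle_power_general q n (by omega) A hspan
end

section
/- Let q ≥ 2 and let G = (V,A) be a directed graph. The graph G_1 constructed from G is (q+1)-partite: the sets W_0, W_1, …, W_q partition the vertex set of G_1, and each W_ℓ is an independent set in G_1. -/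
/-!
Adjacent vertices of `G₁` have indices at distance `1, …, q` (same base vertex) or
`q + 2, …, 2q + 1` (joined by an arc). The only multiples of `q + 1` below `2q + 2` are `0` and
`q + 1`, precisely the distances that are skipped, so adjacent indices are never congruent.
-/

theorem not_modEq_of_add_mul_lt_of_lt_add_mul_succ {m k a b : ℕ}
    (hab : a + m * k < b) (hba : b < a + m * (k + 1)) : ¬ a ≡ b [MOD m] := by
  rw [Nat.modEq_iff_dvd' (by omega)]
  exact Nat.not_dvd_of_lt_of_lt_mul_succ (k := k) (by omega) (by omega)

section BlowupGraph

variable {V : Type*}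

/-- The graph `G₁` of a digraph `A` on an arbitrary, possibly infinite, vertex type.
As in `adj1`, the pair `(v, i)` stands for `v_{i+1}`. -/
def blowupGraph (q : ℕ) (A : V → V → Prop) : SimpleGraph (V × Fin (2 * q + 2)) where
  Adj x y :=
    (x.1 = y.1 ∧ x.2 ≠ y.2 ∧ max x.2.val y.2.val - min x.2.val y.2.val ≤ q) ∨
    (A x.1 y.1 ∧ y.2.val + (q + 2) ≤ x.2.val) ∨
    (A y.1 x.1 ∧ x.2.val + (q + 2) ≤ y.2.val)
  symm := ⟨by
    rintro x y (⟨hv, hne, hle⟩ | hxy | hyx)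
    · exact Or.inl ⟨hv.symm, hne.symm, by rwa [max_comm, min_comm]⟩
    · exact Or.inr (Or.inr hxy)
    · exact Or.inr (Or.inl hyx)⟩
  loopless := ⟨by
    rintro x (⟨-, hne, -⟩ | ⟨-, hle⟩ | ⟨-, hle⟩)
    · exact hne rfl
    all_goals omega⟩

/-- The part `W_ℓ` of `G₁`; the `+ 1` turns the index `i : Fin (2 * q + 2)` into the paper's
index, which starts at `1`. -/
def blowupPart (V : Type*) (q : ℕ) (ℓ : Fin (q + 1)) : Set (V × Fin (2 * q + 2)) :=
  {x | (x.2.val + 1) % (q + 1) = ℓ.val}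

theorem existsUnique_mem_blowupPart (q : ℕ) (x : V × Fin (2 * q + 2)) :
    ∃! ℓ, x ∈ blowupPart V q ℓ :=
  ⟨⟨(x.2.val + 1) % (q + 1), Nat.mod_lt _ q.succ_pos⟩, rfl, fun _ hℓ => Fin.ext hℓ.symm⟩

variable {q : ℕ} {A : V → V → Prop} {x y : V × Fin (2 * q + 2)}

theorem index_gap_of_blowupGraph_adj (hadj : (blowupGraph q A).Adj x y) (hle : x.2 ≤ y.2) :
    (x.2.val < y.2.val ∧ y.2.val < x.2.val + (q + 1)) ∨ x.2.val + (q + 1) < y.2.val := by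
  rcases hadj with ⟨-, hne, hdist⟩ | ⟨-, hgap⟩ | ⟨-, hgap⟩
  · have hlt : x.2 < y.2 := lt_of_le_of_ne hle hne
    left
    omega
  · omega
  · right
    omega

theorem not_index_modEq_of_blowupGraph_adj (hadj : (blowupGraph q A).Adj x y) :
    ¬ x.2.val ≡ y.2.val [MOD q + 1] := by
  wlog hle : x.2 ≤ y.2 generalizing x y
  · exact fun hmod => this hadj.symm (le_of_not_ge hle) hmod.symm
  rcases index_gap_of_blowupGraph_adj hadj hle with ⟨hlt, hnear⟩ | hfar
  · exact not_modEq_of_add_mul_lt_of_lt_add_mul_succ (k := 0) (by omega) (by omega)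
  · exact not_modEq_of_add_mul_lt_of_lt_add_mul_succ (k := 1) (by omega) (by omega)

theorem isIndepSet_blowupPart (q : ℕ) (A : V → V → Prop) (ℓ : Fin (q + 1)) :
    (blowupGraph q A).IsIndepSet (blowupPart V q ℓ) := by
  intro x hx y hy _ hadj
  have hmod : x.2.val + 1 ≡ y.2.val + 1 [MOD q + 1] := hx.trans hy.symm
  exact not_index_modEq_of_blowupGraph_adj hadj (hmod.add_right_cancel' 1)

end BlowupGraph

theorem G1_is_q_add_one_partite_general {V : Type*} (q : ℕ) (A : V → V → Prop) :
    (∀ x : V × Fin (2 * q + 2), ∃! ℓ, x ∈ blowupPart V q ℓ) ∧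
    (∀ ℓ : Fin (q + 1), (blowupGraph q A).IsIndepSet (blowupPart V q ℓ)) :=
  ⟨existsUnique_mem_blowupPart q, isIndepSet_blowupPart q A⟩

/-- The graph `G₁` is `(q+1)`-partite: the sets `W₀, W₁, …, W_q` (where `W_ℓ` consists
of the vertices `(v,i)` whose original index `i+1` is congruent to `ℓ` modulo `q+1`)
partition the vertex set, and each `W_ℓ` is an independent set in `G₁`. -/
theorem G1_is_q_add_one_partite (q n : ℕ) (hq : 2 ≤ q) (A : Fin n → Fin n → Prop) :
    (∀ x : Fin n × Fin (2*q+2), ∃! ℓ : Fin (q+1), (x.2.val + 1) % (q+1) = ℓ.val) ∧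
    (∀ x y : Fin n × Fin (2*q+2),
      (x.2.val + 1) % (q+1) = (y.2.val + 1) % (q+1) → ¬ adj1 q n A x y) := by
  obtain ⟨hpart, hindep⟩ := G1_is_q_add_one_partite_general q A
  exact ⟨hpart, fun x y hmod (hadj : (blowupGraph q A).Adj x y) =>
    hindep ⟨_, Nat.mod_lt _ q.succ_pos⟩ hmod rfl hadj.ne hadj⟩
end

section
/- For every n ≥ 5, the graph C_n^2 has no vertex cut set of size 3: for every set S of at most 3 vertices of C_n^2, the subgraph of C_n^2 induced on the remaining vertices is connected. -/
/-- Adjacency in the graph `C_n^q`: distinct vertices `i` and `j` (represented by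
`Fin n`) are adjacent whenever `|i−j| ≤ q` or `|i−j| ≥ n−q`. -/
def powAdj (n q : ℕ) (i j : Fin n) : Prop :=
  i ≠ j ∧ (max i.val j.val - min i.val j.val ≤ q ∨ n - q ≤ max i.val j.val - min i.val j.val)

/-!
Two vertices outside `S` are joined by two complementary arcs of the cycle. Each step along an arc
may jump over up to `q - 1` vertices of `S`, so an arc is impassable only if at least `q` of its
interior vertices lie in `S`. The interiors are disjoint, hence blocking both arcs takes `2 * q`
vertices.

The cycle is unrolled along `Fin.ofNat n : ℕ → Fin n`, so that for `u ≤ v` the two arcs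
have interiors `Ioo u v` and `Ioo v (u + n)`.
-/

open Finset Relation

lemma exists_mem_Ioc_not_of_card_filter_lt {B : ℕ → Prop} [DecidablePred B] {q a b : ℕ}
    (hab : a + q < b) (hB : #{k ∈ Ioo a b | B k} < q) : ∃ c ∈ Ioc a (a + q), ¬ B c := by
  by_contra! h
  have hsub : Ioc a (a + q) ⊆ {k ∈ Ioo a b | B k} := fun k hk ↦
    mem_filter.2 ⟨mem_Ioo.2 ⟨(mem_Ioc.1 hk).1, (mem_Ioc.1 hk).2.trans_lt hab⟩, h k hk⟩
  have hcard := card_le_card hsub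
  rw [Nat.card_Ioc] at hcard
  omega

lemma reflTransGen_of_card_filter_lt {B : ℕ → Prop} [DecidablePred B] {q a b : ℕ} (hab : a ≤ b)
    (ha : ¬ B a) (hb : ¬ B b) (hB : #{k ∈ Ioo a b | B k} < q) :
    ReflTransGen (fun i j ↦ i ≤ j ∧ j ≤ i + q ∧ ¬ B i ∧ ¬ B j) a b := by
  induction hm : b - a using Nat.strong_induction_on generalizing a with
  | _ m ih =>
    rcases le_or_gt b (a + q) with hle | hlt
    · exact .single ⟨hab, hle, ha, hb⟩
    · obtain ⟨c, hc, hcB⟩ := exists_mem_Ioc_not_of_card_filter_lt hlt hB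
      obtain ⟨hac, hcq⟩ := mem_Ioc.1 hc
      have hBc : #{k ∈ Ioo c b | B k} < q :=
        (card_le_card (filter_subset_filter B (Ioo_subset_Ioo_left hac.le))).trans_lt hB
      exact .head ⟨hac.le, hcq, ha, hcB⟩ (ih (b - c) (by omega) (by omega) hcB hBc rfl)

lemma powAdj.symm {n q : ℕ} {i j : Fin n} (h : powAdj n q i j) : powAdj n q j i := by
  rw [powAdj, max_comm, min_comm]
  exact ⟨h.1.symm, h.2⟩

lemma ofNat_eq_or_powAdj {n q i j : ℕ} [NeZero n] (hij : i ≤ j) (hjq : j ≤ i + q) :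
    Fin.ofNat n i = Fin.ofNat n j ∨ powAdj n q (Fin.ofNat n i) (Fin.ofNat n j) := by
  obtain ⟨d, rfl⟩ := Nat.exists_eq_add_of_le hij
  refine or_iff_not_imp_left.2 fun hne ↦ ⟨hne, ?_⟩
  have : i % n < n := Nat.mod_lt i (NeZero.pos n)
  have : d % n ≤ d := Nat.mod_le d n
  simp only [Fin.val_ofNat, Nat.add_mod_eq_ite (m := i)]
  split_ifs <;> omega

/-- Adjacency in the subgraph of `C_n^q` induced on the complement of `S`. It is encoded as a
relation on all of `Fin n`, in which the vertices of `S` are isolated. -/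
def powAdjAvoiding (n q : ℕ) (S : Finset (Fin n)) (a b : Fin n) : Prop :=
  powAdj n q a b ∧ a ∉ S ∧ b ∉ S

instance powAdjAvoiding.instSymm (n q : ℕ) (S : Finset (Fin n)) :
    Std.Symm (powAdjAvoiding n q S) :=
  ⟨fun _ _ ⟨hadj, ha, hb⟩ ↦ ⟨hadj.symm, hb, ha⟩⟩

lemma reflTransGen_powAdjAvoiding_ofNat {n q a b : ℕ} [NeZero n] {S : Finset (Fin n)}
    (hab : a ≤ b) (ha : Fin.ofNat n a ∉ S) (hb : Fin.ofNat n b ∉ S)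
    (hS : #{k ∈ Ioo a b | Fin.ofNat n k ∈ S} < q) :
    ReflTransGen (powAdjAvoiding n q S) (Fin.ofNat n a) (Fin.ofNat n b) := by
  refine (reflTransGen_of_card_filter_lt hab ha hb hS).lift' (Fin.ofNat n) ?_
  rintro i j ⟨hij, hjq, hi, hj⟩
  rcases ofNat_eq_or_powAdj (n := n) hij hjq with heq | hadj
  · rw [Function.onFun, heq]
  · exact .single ⟨hadj, hi, hj⟩

lemma injOn_ofNat_Ico (n a : ℕ) [NeZero n] :
    Set.InjOn (Fin.ofNat n) (Set.Ico a (a + n)) := fun i hi j hj hij ↦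
  Nat.mod_injOn_Ico a n (by simpa only [coe_Ico, add_comm] using hi)
    (by simpa only [coe_Ico, add_comm] using hj) (congrArg Fin.val hij)

lemma card_filter_Ioo_add_card_filter_Ioo_le {n a b : ℕ} [NeZero n] (S : Finset (Fin n))
    (hab : a ≤ b) (hba : b ≤ a + n) :
    #{k ∈ Ioo a b | Fin.ofNat n k ∈ S} + #{k ∈ Ioo b (a + n) | Fin.ofNat n k ∈ S} ≤ #S := by
  have hdisj : Disjoint (Ioo a b) (Ioo b (a + n)) :=
    disjoint_left.2 fun k hk hk' ↦ (mem_Ioo.1 hk).2.asymm (mem_Ioo.1 hk').1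
  rw [← card_union_of_disjoint (disjoint_filter_filter hdisj), ← filter_union]
  refine card_le_card_of_injOn (Fin.ofNat n) (fun k hk ↦ (mem_filter.1 hk).2) ?_
  refine (injOn_ofNat_Ico n a).mono fun k hk ↦ ?_
  simp only [coe_filter, mem_union, mem_Ioo, Set.mem_ofPred_eq] at hk
  exact Set.mem_Ico.2 (by omega)

theorem cycle_square_no_three_cut_general {n q : ℕ} {S : Finset (Fin n)} (hS : #S < 2 * q)
    {u v : Fin n} (hu : u ∉ S) (hv : v ∉ S) : ReflTransGen (powAdjAvoiding n q S) u v := by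
  wlog huv : u ≤ v generalizing u v
  · exact symm_of (ReflTransGen (powAdjAvoiding n q S)) (this hv hu (le_of_not_ge huv))
  have : NeZero n := ⟨u.pos.ne'⟩
  have hvn : v.val ≤ u.val + n := by omega
  have hu₀ : Fin.ofNat n u = u := Fin.ofNat_val_eq_self u
  have hv₀ : Fin.ofNat n v = v := Fin.ofNat_val_eq_self v
  have hu₁ : Fin.ofNat n (u + n) = u := Fin.ext (by simp [Nat.mod_eq_of_lt])
  have harcs := card_filter_Ioo_add_card_filter_Ioo_le S huv hvn
  have hpassable : #{k ∈ Ioo u.val v.val | Fin.ofNat n k ∈ S} < q ∨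
      #{k ∈ Ioo v.val (u.val + n) | Fin.ofNat n k ∈ S} < q := by omega
  rcases hpassable with h | h
  · have huv_walk := reflTransGen_powAdjAvoiding_ofNat huv (by rwa [hu₀]) (by rwa [hv₀]) h
    rwa [hu₀, hv₀] at huv_walk
  · have hvu_walk := reflTransGen_powAdjAvoiding_ofNat hvn (by rwa [hv₀]) (by rwa [hu₁]) h
    rw [hv₀, hu₁] at hvu_walk
    exact symm_of (ReflTransGen (powAdjAvoiding n q S)) hvu_walk

/-- For every `n ≥ 5`, the graph `C_n^2` has no vertex cut set of size 3: after
removing any set `S` of at most 3 vertices, any two remaining vertices are joined by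
a path avoiding `S` (i.e. the induced subgraph on the remaining vertices is
connected). -/
theorem cycle_square_no_three_cut (n : ℕ) (hn : 5 ≤ n)
    (S : Finset (Fin n)) (hS : S.card ≤ 3)
    (u v : Fin n) (hu : u ∉ S) (hv : v ∉ S) :
    Relation.ReflTransGen (fun a b => powAdj n 2 a b ∧ a ∉ S ∧ b ∉ S) u v :=
  cycle_square_no_three_cut_general (by omega) hu hv
end

section
/- Let G be an undirected graph on n ≥ 5 vertices that contains no five distinct vertices u, v, x, y, z such that u and v are adjacent and each of x, y, z is adjacent to both u and v. If φ and φ' are two spines of spanning subgraphs C_n^2 of G (i.e. cyclic enumerations of all vertices of G such that any two vertices at circular distance at most 2 along the enumeration are adjacent in G) which agree on the first three vertices, φ(1) = φ'(1), φ(2) = φ'(2), φ(3) = φ'(3), then φ = φ'. In particular, a spanning subgraph C_n^2 of such a graph is completely determined by the first three vertices of its spine. -/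
/-!
The vertices at positions `i - 2` and `i - 1` of a spine are adjacent, and both are adjacent to the
vertices at positions `i - 3` and `i`.  As two adjacent vertices have at most two common neighbours,
the vertex at position `i` is the only one left once the three before it are known.
-/

theorem two_lt_encard_iff {α : Type*} {s : Set α} :
    2 < s.encard ↔ ∃ x y z, x ∈ s ∧ y ∈ s ∧ z ∈ s ∧ x ≠ y ∧ x ≠ z ∧ y ≠ z := by
  constructor
  · intro hs
    obtain ⟨t, hts, ht⟩ := Set.exists_subset_encard_eq (k := 3) (Order.add_one_le_of_lt hs)
    obtain ⟨x, y, z, hxy, hxz, hyz, rfl⟩ := Set.encard_eq_three.mp ht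
    exact ⟨x, y, z, hts (by simp), hts (by simp), hts (by simp), hxy, hxz, hyz⟩
  · rintro ⟨x, y, z, hx, hy, hz, hxy, hxz, hyz⟩
    have hsub : {x, y, z} ⊆ s := by simp [Set.insert_subset_iff, hx, hy, hz]
    calc (2 : ℕ∞) < 3 := by decide
      _ = ({x, y, z} : Set α).encard :=
        (Set.encard_eq_three.mpr ⟨x, y, z, hxy, hxz, hyz, rfl⟩).symm
      _ ≤ s.encard := Set.encard_le_encard hsub

/-- The vertex sequence `p` traces the square of a path in `G`: it has no repetitions, and any two
of its terms at distance at most 2 along the sequence are adjacent. Unlike for a spine of `C_n^2`,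
positions are compared linearly, and `p` need not visit every vertex. -/
structure IsSquarePath {V : Type*} (G : SimpleGraph V) {n : ℕ} (p : Fin n → V) : Prop where
  injective : Function.Injective p
  adj : ∀ ⦃i j : Fin n⦄, i < j → j.val ≤ i.val + 2 → G.Adj (p i) (p j)

section SquarePath

variable {V : Type*} {G : SimpleGraph V} {n : ℕ} {p q : Fin n → V}

theorem IsSquarePath.apply_eq_of_forall_lt
    (hG : ∀ ⦃u v : V⦄, G.Adj u v → (G.commonNeighbors u v).encard ≤ 2)
    (hp : IsSquarePath G p) (hq : IsSquarePath G q) {i : Fin n} (hi : 3 ≤ i.val)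
    (hpq : ∀ j < i, p j = q j) : p i = q i := by
  let a : Fin n := ⟨i - 3, by omega⟩
  let b : Fin n := ⟨i - 2, by omega⟩
  let c : Fin n := ⟨i - 1, by omega⟩
  have hab : a < b := Fin.mk_lt_mk.mpr (by omega)
  have hbc : b < c := Fin.mk_lt_mk.mpr (by omega)
  have hci : c < i := Fin.mk_lt_mk.mpr (by omega)
  have hai : a < i := hab.trans (hbc.trans hci)
  have common_first : p a ∈ G.commonNeighbors (p b) (p c) :=
    ⟨(hp.adj hab (by grind)).symm, (hp.adj (hab.trans hbc) (by grind)).symm⟩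
  have common_next {r : Fin n → V} (hr : IsSquarePath G r) :
      r i ∈ G.commonNeighbors (r b) (r c) :=
    ⟨hr.adj (hbc.trans hci) (by grind), hr.adj hci (by grind)⟩
  have common_next_q : q i ∈ G.commonNeighbors (p b) (p c) := by
    rw [hpq b (hbc.trans hci), hpq c hci]
    exact common_next hq
  have first_ne_q : p a ≠ q i := hpq a hai ▸ hq.injective.ne hai.ne
  by_contra hne
  have three_common : 2 < (G.commonNeighbors (p b) (p c)).encard :=
    two_lt_encard_iff.mpr ⟨p a, p i, q i, common_first, common_next hp, common_next_q,
      hp.injective.ne hai.ne, first_ne_q, hne⟩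
  exact three_common.not_ge (hG (hp.adj hbc (by grind)))

theorem spine_determined_by_first_three_general
    (hG : ∀ ⦃u v : V⦄, G.Adj u v → (G.commonNeighbors u v).encard ≤ 2)
    (hp : IsSquarePath G p) (hq : IsSquarePath G q)
    (hpq : ∀ i : Fin n, i.val < 3 → p i = q i) : p = q := by
  funext i
  induction i using WellFoundedLT.induction with
  | ind i ih =>
    rcases lt_or_ge i.val 3 with hi | hi
    · exact hpq i hi
    · exact hp.apply_eq_of_forall_lt hG hq hi ih

end SquarePath

theorem finShift_sub_of_le {n : ℕ} {i j : Fin n} (hij : i ≤ j) :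
    finShift i (j.val - i.val) = j := by
  ext
  simp only [finShift, Nat.add_sub_cancel' (Fin.le_def.mp hij), Nat.mod_eq_of_lt j.isLt]

theorem isSquarePath_of_adj_finShift {V : Type*} {G : SimpleGraph V} {n : ℕ} {p : Fin n → V}
    (hinj : Function.Injective p)
    (hadj : ∀ i : Fin n, ∀ d : ℕ, 1 ≤ d → d ≤ 2 → G.Adj (p i) (p (finShift i d))) :
    IsSquarePath G p where
  injective := hinj
  adj i j hij hji := by
    have h := hadj i (j.val - i.val) (by omega) (by omega)
    rwa [finShift_sub_of_le hij.le] at h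

theorem encard_commonNeighbors_le_two {V : Type*} {G : SimpleGraph V}
    (hno : ¬ ∃ u v x y z : V,
      u ≠ v ∧ u ≠ x ∧ u ≠ y ∧ u ≠ z ∧ v ≠ x ∧ v ≠ y ∧ v ≠ z ∧
      x ≠ y ∧ x ≠ z ∧ y ≠ z ∧
      G.Adj u v ∧ G.Adj u x ∧ G.Adj v x ∧ G.Adj u y ∧ G.Adj v y ∧
      G.Adj u z ∧ G.Adj v z)
    ⦃u v : V⦄ (huv : G.Adj u v) : (G.commonNeighbors u v).encard ≤ 2 := by
  by_contra! hlt
  obtain ⟨x, y, z, ⟨hux, hvx⟩, ⟨huy, hvy⟩, ⟨huz, hvz⟩, hxy, hxz, hyz⟩ :=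
    two_lt_encard_iff.mp hlt
  exact hno ⟨u, v, x, y, z, huv.ne, hux.ne, huy.ne, huz.ne, hvx.ne, hvy.ne, hvz.ne,
    hxy, hxz, hyz, huv, hux, hvx, huy, hvy, huz, hvz⟩

/-- Let `G` be an undirected graph on `n ≥ 5` vertices containing no five distinct
vertices `u, v, x, y, z` with `u` adjacent to `v` and `x, y, z` common neighbours of
`u` and `v`.  If `φ` and `φ'` are spines of spanning subgraphs `C_n^2` of `G`
(cyclic enumerations of the vertices in which any two vertices at circular distance
at most 2 are adjacent) agreeing on the first three vertices, then `φ = φ'`;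
in particular a spanning `C_n^2` is determined by the first three spine vertices. -/
theorem spine_determined_by_first_three (n : ℕ) (hn : 5 ≤ n)
    (G : SimpleGraph (Fin n))
    (hno : ¬ ∃ u v x y z : Fin n,
      u ≠ v ∧ u ≠ x ∧ u ≠ y ∧ u ≠ z ∧ v ≠ x ∧ v ≠ y ∧ v ≠ z ∧
      x ≠ y ∧ x ≠ z ∧ y ≠ z ∧
      G.Adj u v ∧ G.Adj u x ∧ G.Adj v x ∧ G.Adj u y ∧ G.Adj v y ∧
      G.Adj u z ∧ G.Adj v z)
    (φ φ' : Equiv.Perm (Fin n))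
    (hφ : ∀ i : Fin n, ∀ p : ℕ, 1 ≤ p → p ≤ 2 → G.Adj (φ i) (φ (finShift i p)))
    (hφ' : ∀ i : Fin n, ∀ p : ℕ, 1 ≤ p → p ≤ 2 → G.Adj (φ' i) (φ' (finShift i p)))
    (h1 : φ ⟨0, by omega⟩ = φ' ⟨0, by omega⟩)
    (h2 : φ ⟨1, by omega⟩ = φ' ⟨1, by omega⟩)
    (h3 : φ ⟨2, by omega⟩ = φ' ⟨2, by omega⟩) :
    φ = φ' := by
  have agree (i : Fin n) (hi : i.val < 3) : φ i = φ' i := by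
    obtain ⟨k, hk⟩ := i
    interval_cases k
    exacts [h1, h2, h3]
  exact DFunLike.coe_injective <| spine_determined_by_first_three_general
    (encard_commonNeighbors_le_two hno) (isSquarePath_of_adj_finShift φ.injective hφ)
    (isSquarePath_of_adj_finShift φ'.injective hφ') agree
end

section
/- (Supnick) Let D be a symmetric n×n Monge matrix. Then the permutation σ that first traverses the odd cities in increasing order and then traverses the even cities in decreasing order, i.e. σ = ⟨1,3,5,7,…,8,6,4,2⟩ (formally σ(i) = 2i−1 for 1 ≤ i ≤ ⌈n/2⌉ and σ(i) = 2(n−i+1) for ⌈n/2⌉ < i ≤ n), is an optimal TSP tour: Σ_{i=1}^{n} d(σ(i),σ(i+1)) ≤ Σ_{i=1}^{n} d(π(i),π(i+1)) for every permutation π of {1,…,n}, where indices are taken cyclically modulo n. -/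
/-- The TSP tour length `∑_{i=1}^{n} d(π(i), π(i+1))`, indices cyclically modulo `n`. -/
noncomputable def tourLen {n : ℕ} (D : Fin n → Fin n → ℝ) (π : Equiv.Perm (Fin n)) : ℝ :=
  ∑ i : Fin n, D (π i) (π (finShift i 1))

/-- `D` is a Monge matrix: `d(i,j) + d(r,s) ≤ d(i,s) + d(r,j)` for all `i < r`, `j < s`. -/
def MongeMat {n : ℕ} (D : Fin n → Fin n → ℝ) : Prop :=
  ∀ i r j s : Fin n, i < r → j < s → D i j + D r s ≤ D i s + D r j

/-!
A symmetric Monge matrix is, up to terms depending on only one of the two cities, a nonnegative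
symmetric combination of the 0-1 matrices `[i ≤ k ∧ l < j]`. The length of a tour is therefore, up
to a constant, a symmetric nonnegative combination of the numbers `U(k, l)` of edges leading from
`{x | x ≤ k}` to `{x | l < x}`, and it suffices that Supnick's tour minimizes each
`U(k, l) + U(l, k)`. For every tour and `k ≤ l`, this sum is at least `l - k` by counting, and at
least `U(k, k) + U(l, l) ≥ 2` by supermodularity. A tour whose steps have size `1` or `2` and which
crosses every cut upwards exactly once attains the larger of the two bounds.
-/

open Finset Equiv.Perm

section Crossings

variable {α : Type*} [LinearOrder α] [Fintype α]

/-- The edges `x → τ x`, recorded by their tails `x`, of the tour with successor map `τ` that lead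
from `{x | x ≤ a}` to `{x | b < x}`. For `a = b` these are the upward crossings of the cut at `a`;
`b < a` is allowed, and then the two sets overlap. -/
def upCrossings (τ : Equiv.Perm α) (a b : α) : Finset α :=
  {x | x ≤ a ∧ b < τ x}

lemma mem_upCrossings {τ : Equiv.Perm α} {a b x : α} :
    x ∈ upCrossings τ a b ↔ x ≤ a ∧ b < τ x := by
  simp [upCrossings]

lemma upCrossings_self_nonempty {τ : Equiv.Perm α} (hτ : τ.IsCycleOn Set.univ) {a : α}
    (ha : ¬IsMax a) : (upCrossings τ a a).Nonempty := by
  obtain ⟨b, hab⟩ := not_isMax_iff.mp ha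
  by_contra hempty
  have closed : ∀ x ≤ a, τ x ≤ a := fun x hx => not_lt.mp fun hlt =>
    hempty ⟨x, mem_upCrossings.mpr ⟨hx, hlt⟩⟩
  have orbit_le (n : ℕ) : (τ ^ n) a ≤ a := by
    induction n with
    | zero => exact le_rfl
    | succ n ih => simpa only [pow_succ', mul_apply] using closed _ ih
  obtain ⟨n, -, rfl⟩ := hτ.exists_pow_eq' Set.finite_univ (Set.mem_univ a) (Set.mem_univ b)
  exact (orbit_le n).not_gt hab

lemma upCrossings_self_inter_self (τ : Equiv.Perm α) {a b : α} (hab : a ≤ b) :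
    upCrossings τ a a ∩ upCrossings τ b b = upCrossings τ a b := by
  ext x
  simp only [mem_inter, mem_upCrossings]
  exact ⟨fun h => ⟨h.1.1, h.2.2⟩,
    fun h => ⟨⟨h.1, hab.trans_lt h.2⟩, h.1.trans hab, h.2⟩⟩

lemma upCrossings_self_union_self_subset (τ : Equiv.Perm α) {a b : α} (hab : a ≤ b) :
    upCrossings τ a a ∪ upCrossings τ b b ⊆ upCrossings τ b a := by
  intro x hx
  simp only [mem_union, mem_upCrossings] at hx ⊢
  exact hx.elim (fun h => ⟨h.1.trans hab, h.2⟩) fun h => ⟨h.1, hab.trans_lt h.2⟩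

lemma upCrossings_self_union_self_of_wcovBy {τ : Equiv.Perm α} (hτ : ∀ x, τ x ≠ x) {a b : α}
    (hab : a ⩿ b) : upCrossings τ a a ∪ upCrossings τ b b = upCrossings τ b a := by
  refine (upCrossings_self_union_self_subset τ hab.le).antisymm fun x hx => ?_
  obtain ⟨hxb, haτ⟩ := mem_upCrossings.mp hx
  have eq_of_mem_Ioc {y : α} (hay : a < y) (hyb : y ≤ b) : y = b :=
    hyb.antisymm (not_lt.mp (hab.2 hay))
  rw [mem_union, mem_upCrossings, mem_upCrossings]
  by_contra! h
  have hax : a < x := lt_of_not_ge fun hxa => haτ.not_ge (h.1 hxa)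
  exact hτ x ((eq_of_mem_Ioc haτ (h.2 hxb)).trans (eq_of_mem_Ioc hax hxb).symm)

lemma card_upCrossings_self_add_self_le (τ : Equiv.Perm α) {a b : α} (hab : a ≤ b) :
    #(upCrossings τ a a) + #(upCrossings τ b b) ≤
      #(upCrossings τ a b) + #(upCrossings τ b a) := by
  rw [← card_inter_add_card_union, upCrossings_self_inter_self τ hab]
  gcongr
  exact upCrossings_self_union_self_subset τ hab

lemma card_upCrossings_self_add_self_of_wcovBy {τ : Equiv.Perm α} (hτ : ∀ x, τ x ≠ x) {a b : α}
    (hab : a ⩿ b) :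
    #(upCrossings τ a a) + #(upCrossings τ b b) =
      #(upCrossings τ a b) + #(upCrossings τ b a) := by
  rw [← card_inter_add_card_union, upCrossings_self_inter_self τ hab.le,
    upCrossings_self_union_self_of_wcovBy hτ hab]

lemma two_le_card_upCrossings_add_swap {τ : Equiv.Perm α} (hτ : τ.IsCycleOn Set.univ) {a b : α}
    (hab : a ≤ b) (hb : ¬IsMax b) :
    2 ≤ #(upCrossings τ a b) + #(upCrossings τ b a) := by
  have ha : ¬IsMax a := fun h => hb (h.mono hab)
  have := (upCrossings_self_nonempty hτ ha).card_pos
  have := (upCrossings_self_nonempty hτ hb).card_pos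
  have := card_upCrossings_self_add_self_le τ hab
  omega

lemma upCrossings_eq_sdiff [LocallyFiniteOrderBot α] (τ : Equiv.Perm α) (a b : α) :
    upCrossings τ b a = Iic b \ (Iic a).map τ.symm.toEmbedding := by
  ext x
  simp [mem_upCrossings, mem_map_equiv]

end Crossings

section NarrowPyramidal

variable {n : ℕ}

/-- Successor maps of tours on `Fin n` with steps of size `1` or `2` that cross every cut upwards
at most once. The latter is what makes a tour pyramidal: it climbs to the last city and then
descends. That `τ` is a single cycle is not part of the definition. -/
structure IsNarrowPyramidal (τ : Equiv.Perm (Fin n)) : Prop where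
  apply_ne (x : Fin n) : τ x ≠ x
  apply_le (x : Fin n) : (τ x : ℕ) ≤ x + 2
  le_apply (x : Fin n) : (x : ℕ) ≤ τ x + 2
  card_upCrossings_self_le (a : Fin n) : #(upCrossings τ a a) ≤ 1

lemma sub_le_card_upCrossings (τ : Equiv.Perm (Fin n)) (a b : Fin n) :
    (b - a : ℕ) ≤ #(upCrossings τ b a) := by
  simpa [upCrossings_eq_sdiff] using
    le_card_sdiff ((Iic a).map τ.symm.toEmbedding) (Iic b)

lemma card_upCrossings_eq_sub {τ : Equiv.Perm (Fin n)} {a b : Fin n}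
    (h : ∀ x, τ x ≤ a → x ≤ b) : #(upCrossings τ b a) = (b - a : ℕ) := by
  have hsub : (Iic a).map τ.symm.toEmbedding ⊆ Iic b := fun x hx =>
    mem_Iic.mpr (h x (by simpa [mem_map_equiv] using hx))
  simp [upCrossings_eq_sdiff, card_sdiff_of_subset hsub]

namespace IsNarrowPyramidal

variable {σ : Equiv.Perm (Fin n)}

lemma card_upCrossings_add_swap_of_add_two_le (hσ : IsNarrowPyramidal σ) {a b : Fin n}
    (hab : (a : ℕ) + 2 ≤ b) :
    #(upCrossings σ a b) + #(upCrossings σ b a) = (b - a : ℕ) := by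
  have no_long_jump : upCrossings σ a b = ∅ := by
    refine eq_empty_of_forall_notMem fun x hx => ?_
    have := hσ.apply_le x
    simp only [mem_upCrossings, Fin.le_def, Fin.lt_def] at hx
    omega
  rw [no_long_jump, card_empty, zero_add]
  refine card_upCrossings_eq_sub fun x hx => ?_
  have := hσ.le_apply x
  simp only [Fin.le_def] at hx ⊢
  omega

lemma card_upCrossings_add_swap_le_two (hσ : IsNarrowPyramidal σ) {a b : Fin n}
    (hab : a ⩿ b) : #(upCrossings σ a b) + #(upCrossings σ b a) ≤ 2 := by
  rw [← card_upCrossings_self_add_self_of_wcovBy hσ.apply_ne hab]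
  exact add_le_add (hσ.card_upCrossings_self_le a) (hσ.card_upCrossings_self_le b)

lemma card_upCrossings_add_swap_le (hσ : IsNarrowPyramidal σ) {τ : Equiv.Perm (Fin n)}
    (hτ : τ.IsCycleOn Set.univ) {a b : Fin n} (ha : ¬IsMax a) (hb : ¬IsMax b) :
    #(upCrossings σ a b) + #(upCrossings σ b a) ≤
      #(upCrossings τ a b) + #(upCrossings τ b a) := by
  wlog hab : a ≤ b generalizing a b
  · rw [add_comm #(upCrossings σ a b), add_comm #(upCrossings τ a b)]
    exact this hb ha (le_of_not_ge hab)
  by_cases hfar : (a : ℕ) + 2 ≤ b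
  · calc #(upCrossings σ a b) + #(upCrossings σ b a) = (b - a : ℕ) :=
          hσ.card_upCrossings_add_swap_of_add_two_le hfar
      _ ≤ #(upCrossings τ b a) := sub_le_card_upCrossings τ a b
      _ ≤ _ := Nat.le_add_left _ _
  · have hcov : a ⩿ b := ⟨hab, fun c hac hcb => by omega⟩
    exact (hσ.card_upCrossings_add_swap_le_two hcov).trans
      (two_le_card_upCrossings_add_swap hτ hab hb)

end IsNarrowPyramidal

end NarrowPyramidal

section Telescoping

variable {m : ℕ} {G : Type*} [AddCommGroup G]

lemma sum_succ_sub_castSucc_of_lt (f : Fin (m + 1) → G) (j : Fin (m + 1)) :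
    ∑ l : Fin m with l.castSucc < j, (f l.succ - f l.castSucc) = f j - f 0 := by
  induction j using Fin.induction with
  | zero => simp
  | succ j ih =>
    have hinsert : univ.filter (fun l : Fin m => l.castSucc < j.succ) =
        insert j (univ.filter fun l => l.castSucc < j.castSucc) := by
      ext l
      simp [Fin.castSucc_lt_succ_iff, le_iff_eq_or_lt]
    rw [hinsert, sum_insert (by simp), ih, sub_add_sub_cancel]

lemma sum_castSucc_sub_succ_of_le (f : Fin (m + 1) → G) (i : Fin (m + 1)) :
    ∑ k : Fin m with i ≤ k.castSucc, (f k.castSucc - f k.succ) = f i - f (Fin.last m) := by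
  have below := sum_succ_sub_castSucc_of_lt f i
  have total := sum_succ_sub_castSucc_of_lt f (Fin.last m)
  simp only [Fin.castSucc_lt_last, filter_true] at total
  rw [← sum_filter_add_sum_filter_not univ (fun k : Fin m => k.castSucc < i), below] at total
  simp only [not_lt] at total
  rw [← neg_inj, ← sum_neg_distrib]
  simpa only [neg_sub, sub_sub_sub_cancel_right] using eq_sub_of_add_eq' total

end Telescoping

section MongeDensity

variable {m : ℕ}

/-- The defect in the Monge inequality for the adjacent rows `k`, `k + 1` and columns `l`, `l + 1`,
known as the density matrix of `D`. -/
def mongeDensity (D : Fin (m + 1) → Fin (m + 1) → ℝ) (k l : Fin m) : ℝ :=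
  D k.castSucc l.succ + D k.succ l.castSucc - D k.castSucc l.castSucc - D k.succ l.succ

lemma MongeMat.mongeDensity_nonneg {D : Fin (m + 1) → Fin (m + 1) → ℝ} (hM : MongeMat D)
    (k l : Fin m) : 0 ≤ mongeDensity D k l := by
  have := hM k.castSucc k.succ l.castSucc l.succ Fin.castSucc_lt_succ Fin.castSucc_lt_succ
  unfold mongeDensity
  linarith

lemma mongeDensity_comm {D : Fin (m + 1) → Fin (m + 1) → ℝ} (hsymm : ∀ i j, D i j = D j i)
    (k l : Fin m) : mongeDensity D k l = mongeDensity D l k := by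
  unfold mongeDensity
  rw [hsymm k.castSucc l.succ, hsymm k.succ l.castSucc, hsymm k.castSucc l.castSucc,
    hsymm k.succ l.succ]
  ring

lemma sum_mongeDensity (D : Fin (m + 1) → Fin (m + 1) → ℝ) (i j : Fin (m + 1)) :
    ∑ k : Fin m with i ≤ k.castSucc, ∑ l : Fin m with l.castSucc < j, mongeDensity D k l =
      D i j - D i 0 - (D (Fin.last m) j - D (Fin.last m) 0) := by
  have row (k : Fin m) : ∑ l : Fin m with l.castSucc < j, mongeDensity D k l =
      (D k.castSucc j - D k.castSucc 0) - (D k.succ j - D k.succ 0) := by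
    rw [← sum_succ_sub_castSucc_of_lt, ← sum_succ_sub_castSucc_of_lt, ← sum_sub_distrib]
    refine sum_congr rfl fun l _ => ?_
    unfold mongeDensity
    ring
  simp only [row]
  exact sum_castSucc_sub_succ_of_le (fun i => D i j - D i 0) i

lemma sum_apply_perm_eq_add_sum_mongeDensity_mul (D : Fin (m + 1) → Fin (m + 1) → ℝ)
    (τ : Equiv.Perm (Fin (m + 1))) :
    ∑ x, D x (τ x) =
      ∑ x, (D x 0 + D (Fin.last m) x - D (Fin.last m) 0) +
        ∑ k, ∑ l, mongeDensity D k l * #(upCrossings τ k.castSucc l.castSucc) := by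
  have crossings : ∑ k, ∑ l, mongeDensity D k l * #(upCrossings τ k.castSucc l.castSucc) =
      ∑ x, ∑ k : Fin m with x ≤ k.castSucc, ∑ l : Fin m with l.castSucc < τ x,
        mongeDensity D k l := by
    simp only [sum_filter, upCrossings, card_filter, Nat.cast_sum, mul_sum]
    rw [sum_comm (s := univ (α := Fin (m + 1)))]
    refine sum_congr rfl fun k _ => ?_
    rw [sum_comm]
    refine sum_congr rfl fun x _ => ?_
    split_ifs with hx <;> simp [hx]
  rw [crossings]
  simp only [sum_mongeDensity, sum_sub_distrib, sum_add_distrib,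
    Equiv.sum_comp τ (D (Fin.last m))]
  ring

end MongeDensity

lemma sum_mul_le_sum_mul_of_symm {ι R : Type*} [Fintype ι] [CommRing R] [LinearOrder R]
    [IsStrictOrderedRing R] {c f g : ι → ι → R} (hc : ∀ k l, 0 ≤ c k l)
    (hsymm : ∀ k l, c k l = c l k) (hfg : ∀ k l, f k l + f l k ≤ g k l + g l k) :
    ∑ k, ∑ l, c k l * f k l ≤ ∑ k, ∑ l, c k l * g k l := by
  have two_mul_sum (h : ι → ι → R) :
      2 * ∑ k, ∑ l, c k l * h k l = ∑ k, ∑ l, c k l * (h k l + h l k) := by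
    have transpose : ∑ k, ∑ l, c k l * h l k = ∑ k, ∑ l, c k l * h k l := by
      rw [sum_comm]
      simp only [hsymm]
    simp only [mul_add, sum_add_distrib, transpose, two_mul]
  refine le_of_mul_le_mul_left ?_ (two_pos : (0 : R) < 2)
  rw [two_mul_sum, two_mul_sum]
  exact sum_le_sum fun k _ => sum_le_sum fun l _ => mul_le_mul_of_nonneg_left (hfg k l) (hc k l)

theorem IsNarrowPyramidal.sum_apply_le {n : ℕ} {D : Fin n → Fin n → ℝ}
    (hsymm : ∀ i j, D i j = D j i) (hM : MongeMat D) {σ τ : Equiv.Perm (Fin n)}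
    (hσ : IsNarrowPyramidal σ) (hτ : τ.IsCycleOn Set.univ) :
    ∑ x, D x (σ x) ≤ ∑ x, D x (τ x) := by
  obtain _ | m := n
  · simp
  have not_isMax (k : Fin m) : ¬IsMax k.castSucc := not_isMax_iff.mpr ⟨_, Fin.castSucc_lt_succ⟩
  simp only [sum_apply_perm_eq_add_sum_mongeDensity_mul]
  refine add_le_add_right ?_ _
  refine sum_mul_le_sum_mul_of_symm hM.mongeDensity_nonneg (mongeDensity_comm hsymm) fun k l => ?_
  exact_mod_cast hσ.card_upCrossings_add_swap_le hτ (not_isMax k) (not_isMax l)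

section TourSucc

variable {n : ℕ}

/-- The successor map of the closed tour `π(1), …, π(n)`, sending each city to the next one. -/
def tourSucc (π : Equiv.Perm (Fin n)) : Equiv.Perm (Fin n) :=
  π * finRotate n * π⁻¹

lemma tourSucc_apply (π : Equiv.Perm (Fin n)) (i : Fin n) :
    tourSucc π (π i) = π (finRotate n i) := by
  simp [tourSucc]

lemma finShift_one (i : Fin n) : finShift i 1 = finRotate n i := by
  have := i.neZero
  rw [finRotate_apply]
  ext
  simp [finShift, Fin.val_add]

lemma tourLen_eq_sum_tourSucc (D : Fin n → Fin n → ℝ) (π : Equiv.Perm (Fin n)) :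
    tourLen D π = ∑ x, D x (tourSucc π x) := by
  rw [← Equiv.sum_comp π]
  simp only [tourLen, tourSucc_apply, finShift_one]

lemma isCycleOn_finRotate (n : ℕ) : (finRotate n).IsCycleOn Set.univ := by
  obtain hn | hn := subsingleton_or_nontrivial (Fin n)
  · exact isCycleOn_of_subsingleton _ _
  · have hn := Fin.nontrivial_iff_two_le.mp hn
    simpa only [← mem_support, support_finRotate_of_le hn, coe_univ, setOfPred_mem] using
      (isCycle_finRotate_of_le hn).isCycleOn

lemma isCycleOn_tourSucc (π : Equiv.Perm (Fin n)) : (tourSucc π).IsCycleOn Set.univ := by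
  simpa [tourSucc] using (isCycleOn_finRotate n).conj (g := π)

end TourSucc

section SupnickTour

variable {n : ℕ} {σ : Equiv.Perm (Fin n)}

lemma supnick_step_le_two_and_even
    (hσ : ∀ i : Fin n, (σ i).val =
      if i.val < (n + 1) / 2 then 2 * i.val else 2 * (n - 1 - i.val) + 1)
    (x : Fin n) :
    (tourSucc σ x : ℕ) ≤ x + 2 ∧ (x : ℕ) ≤ tourSucc σ x + 2 ∧
      (x < tourSucc σ x → Even (x : ℕ)) := by
  obtain _ | m := n
  · exact x.elim0
  obtain ⟨i, rfl⟩ := σ.surjective x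
  rw [tourSucc_apply, Fin.lt_def, hσ, hσ, coe_finRotate, Nat.even_iff]
  have := i.isLt
  simp only [Fin.ext_iff, Fin.val_last]
  split_ifs <;> omega

lemma isNarrowPyramidal_tourSucc_supnick [Nontrivial (Fin n)]
    (hσ : ∀ i : Fin n, (σ i).val =
      if i.val < (n + 1) / 2 then 2 * i.val else 2 * (n - 1 - i.val) + 1) :
    IsNarrowPyramidal (tourSucc σ) where
  apply_ne x := (isCycleOn_tourSucc σ).apply_ne Set.nontrivial_univ (Set.mem_univ x)
  apply_le x := (supnick_step_le_two_and_even hσ x).1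
  le_apply x := (supnick_step_le_two_and_even hσ x).2.1
  card_upCrossings_self_le a := by
    have even_window {x : Fin n} (hx : x ∈ upCrossings (tourSucc σ) a a) :
        Even (x : ℕ) ∧ (x : ℕ) ≤ a ∧ (a : ℕ) ≤ x + 1 := by
      obtain ⟨hxa, hax⟩ := mem_upCrossings.mp hx
      obtain ⟨hle, -, heven⟩ := supnick_step_le_two_and_even hσ x
      exact ⟨heven (hxa.trans_lt hax), hxa, by omega⟩
    refine card_le_one.mpr fun x hx y hy => ?_
    obtain ⟨⟨r, hr⟩, hxa, hax⟩ := even_window hx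
    obtain ⟨⟨s, hs⟩, hya, hay⟩ := even_window hy
    omega

end SupnickTour

/-- Theorem (Supnick): for a symmetric Monge matrix, the permutation `σ` that first
traverses the odd cities in increasing order and then the even cities in decreasing
order (in 0-based terms: `σ(i) = 2i` for `i < ⌈n/2⌉` and `σ(i) = 2(n−1−i)+1`
otherwise) is an optimal TSP tour. -/
theorem supnick_tsp_monge (n : ℕ)
    (D : Fin n → Fin n → ℝ) (hsymm : ∀ i j, D i j = D j i) (hM : MongeMat D)
    (σ : Equiv.Perm (Fin n))
    (hσ : ∀ i : Fin n, (σ i).val =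
      if i.val < (n+1)/2 then 2*i.val else 2*(n-1-i.val)+1)
    (π : Equiv.Perm (Fin n)) :
    tourLen D σ ≤ tourLen D π := by
  obtain hn | hn := subsingleton_or_nontrivial (Fin n)
  · exact (congrArg (tourLen D) (Subsingleton.elim σ π)).le
  rw [tourLen_eq_sum_tourSucc, tourLen_eq_sum_tourSucc]
  exact (isNarrowPyramidal_tourSucc_supnick hσ).sum_apply_le hsymm hM (isCycleOn_tourSucc π)
end
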